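/- For every irrational α ∈ 𝕋 = ℝ/ℤ, every ε > 0, and every ω ∈ 𝕋, there exists a continuous function f : 𝕋 → ℝ with ‖f‖_∞ < ε such that the discrete Schrödinger operator on ℓ²(ℤ) with potential V(n) = f(ω + nα) has pure point spectrum. -/

import Mathlib

open MeasureTheory

noncomputable section

/-- `ψ ∈ ℓ²(ℤ)` is an eigenfunction of the discrete Schrödinger operator with potential `V`
corresponding to the eigenvalue `E`: `ψ ≠ 0` and `ψ(n+1) + ψ(n-1) + V(n)ψ(n) = Eψ(n)`. -/
def IsEigenfunction (V : ℤ → ℝ) (E : ℝ) (ψ : lp (fun _ : ℤ => ℝ) 2) : Prop :=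
  ψ ≠ 0 ∧ ∀ n : ℤ, (ψ : ∀ _ : ℤ, ℝ) (n + 1) + (ψ : ∀ _ : ℤ, ℝ) (n - 1)
    + V n * (ψ : ∀ _ : ℤ, ℝ) n = E * (ψ : ∀ _ : ℤ, ℝ) n

/-- The discrete Schrödinger operator with potential `V` has pure point spectrum:
its eigenfunctions span a dense subspace of `ℓ²(ℤ)`. -/
def HasPurePointSpectrum (V : ℤ → ℝ) : Prop :=
  (Submodule.span ℝ
    {ψ : lp (fun _ : ℤ => ℝ) 2 | ∃ E : ℝ, IsEigenfunction V E ψ}).topologicalClosure = ⊤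

namespace KunzSouillard

open scoped ENNReal NNReal

/-! ### One-step averages over a uniform coupling -/

/-- The uniform probability distribution on `[c - ε, c + ε]`. -/
def unif (c ε : ℝ) : Measure ℝ :=
  ((2 * ε).toNNReal)⁻¹ • volume.restrict (Set.Icc (c - ε) (c + ε))

instance (c ε : ℝ) : IsFiniteMeasure (unif c ε) := by unfold unif; infer_instance

lemma unif_univ {c ε : ℝ} (hε : 0 < ε) : unif c ε Set.univ = 1 := by
  have h : (0:ℝ) < 2 * ε := by linarith
  have h1 : c + ε - (c - ε) = 2 * ε := by ring
  simp only [unif, Measure.smul_apply, Measure.restrict_apply MeasurableSet.univ, Set.univ_inter,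
    Real.volume_Icc, h1, ENNReal.smul_def, smul_eq_mul]
  rw [ENNReal.coe_inv (by simpa using h)]
  exact ENNReal.inv_mul_cancel (by simpa using h) (by simp)

lemma isProbabilityMeasure_unif (c : ℝ) {ε : ℝ} (hε : 0 < ε) :
    IsProbabilityMeasure (unif c ε) := ⟨unif_univ hε⟩

lemma ae_unif_mem (c ε : ℝ) : ∀ᵐ a ∂unif c ε, a ∈ Set.Icc (c - ε) (c + ε) := by
  unfold unif
  exact Measure.ae_smul_measure (ae_restrict_mem measurableSet_Icc) _

lemma lintegral_unif (c : ℝ) {ε : ℝ} (hε : 0 < ε) (g : ℝ → ℝ≥0∞) :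
    ∫⁻ a, g a ∂unif c ε =
      (ENNReal.ofReal (2 * ε))⁻¹ * ∫⁻ a in Set.Icc (c - ε) (c + ε), g a := by
  have h : (0:ℝ) < 2 * ε := by linarith
  rw [unif, lintegral_smul_measure, ENNReal.smul_def, smul_eq_mul,
    ENNReal.coe_inv (by simpa using h)]
  rfl

/-- Average of `h` after one random transfer step at energy `E`. -/
def avgStep (E c ε : ℝ) (h : ℝ × ℝ → ℝ≥0∞) (x : ℝ × ℝ) : ℝ≥0∞ :=
  ∫⁻ a, h ((E - a) * x.1 - x.2, x.1) ∂unif c ε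

/-- Homogeneity of degree `-k`. -/
def HomNeg (k : ℕ) (h : ℝ × ℝ → ℝ≥0∞) : Prop :=
  ∀ c : ℝ, c ≠ 0 → ∀ x : ℝ × ℝ, h (c * x.1, c * x.2) = (ENNReal.ofReal |c|)⁻¹ ^ k * h x

/-- The mass of a homogeneous function in the projective coordinate. -/
def mass (h : ℝ × ℝ → ℝ≥0∞) : ℝ≥0∞ := ∫⁻ t, h (t, 1)

lemma measurable_avgStep {E c ε : ℝ} {h : ℝ × ℝ → ℝ≥0∞} (hh : Measurable h) :
    Measurable (avgStep E c ε h) := by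
  unfold avgStep
  refine Measurable.lintegral_prod_right' (ν := unif c ε)
    (f := fun p : (ℝ × ℝ) × ℝ => h ((E - p.2) * p.1.1 - p.1.2, p.1.1)) ?_
  fun_prop

lemma HomNeg.avgStep {E c ε : ℝ} {k : ℕ} {h : ℝ × ℝ → ℝ≥0∞} (hk : HomNeg k h)
    (hh : Measurable h) : HomNeg k (avgStep E c ε h) := by
  intro d hd x
  unfold KunzSouillard.avgStep
  rw [← lintegral_const_mul _ (by fun_prop)]
  refine lintegral_congr fun a => ?_
  rw [← hk d hd]
  congr 2
  ring

lemma HomNeg.sq {h : ℝ × ℝ → ℝ≥0∞} (hk : HomNeg 1 h) : HomNeg 2 (fun x => h x ^ 2) := by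
  intro d hd x
  simp only [hk d hd x, mul_pow, pow_one]

lemma HomNeg.apply_of_ne {k : ℕ} {h : ℝ × ℝ → ℝ≥0∞} (hk : HomNeg k h) {x y : ℝ} (hy : y ≠ 0) :
    h (x, y) = (ENNReal.ofReal |y|)⁻¹ ^ k * h (x / y, 1) := by
  rw [← hk y hy]
  congr 2
  · field_simp
  · simp

/-- Change of variables `s = b - 1 / t`. -/
lemma lintegral_sub_inv (b : ℝ) (S : Set ℝ) (hS : MeasurableSet S) (hS0 : 0 ∉ S)
    (g : ℝ → ℝ≥0∞) :
    ∫⁻ t in S, (ENNReal.ofReal |t|)⁻¹ ^ 2 * g (b - t⁻¹) =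
      ∫⁻ s in (fun t => b - t⁻¹) '' S, g s := by
  rw [lintegral_image_eq_lintegral_abs_deriv_mul (f' := fun t => (t ^ 2)⁻¹) hS]
  · refine setLIntegral_congr_fun hS fun t ht => ?_
    have h0 : t ≠ 0 := fun h => hS0 (h ▸ ht)
    congr 1
    rw [abs_of_pos (by positivity : (0:ℝ) < (t ^ 2)⁻¹), ENNReal.ofReal_inv_of_pos (by positivity),
      ← sq_abs,
      ENNReal.ofReal_pow (abs_nonneg _), ENNReal.inv_pow]
  · intro t ht
    have h0 : t ≠ 0 := fun h => hS0 (h ▸ ht)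
    have := (hasDerivAt_inv h0).const_sub b
    simpa using this.hasDerivWithinAt
  · intro t _ u _ h
    simpa using h

lemma image_sub_inv_compl_zero (b : ℝ) :
    (fun t : ℝ => b - t⁻¹) '' {0}ᶜ = {b}ᶜ := by
  ext s
  simp only [Set.mem_image, Set.mem_compl_iff, Set.mem_singleton_iff]
  constructor
  · rintro ⟨t, ht, rfl⟩ h
    exact ht (inv_eq_zero.1 (by linarith))
  · intro h
    refine ⟨(b - s)⁻¹, inv_ne_zero (fun h' => h (by linarith)), by simp⟩

lemma lintegral_sub_inv_univ (b : ℝ) (g : ℝ → ℝ≥0∞) :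
    ∫⁻ t, (ENNReal.ofReal |t|)⁻¹ ^ 2 * g (b - t⁻¹) = ∫⁻ s, g s := by
  have h := lintegral_sub_inv b {0}ᶜ (measurableSet_singleton 0).compl (by simp) g
  rw [image_sub_inv_compl_zero] at h
  have e : ∀ c : ℝ, volume.restrict ({c}ᶜ : Set ℝ) = volume := fun c =>
    Measure.restrict_eq_self_of_ae_mem (by simp [ae_iff])
  simpa only [e] using h

lemma ae_ne_zero : ∀ᵐ t : ℝ, t ≠ 0 := by simp [ae_iff]

lemma mass_step {h : ℝ × ℝ → ℝ≥0∞} (hk : HomNeg 2 h) (b : ℝ) :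
    ∫⁻ t : ℝ, h (b * t - 1, t) = mass h := by
  rw [mass, ← lintegral_sub_inv_univ b (fun t => h (t, 1))]
  refine lintegral_congr_ae ?_
  filter_upwards [ae_ne_zero] with t ht
  rw [hk.apply_of_ne ht]
  congr 3
  field_simp

lemma mass_avgStep {E c ε : ℝ} (hε : 0 < ε) {h : ℝ × ℝ → ℝ≥0∞} (hk : HomNeg 2 h)
    (hh : Measurable h) : mass (avgStep E c ε h) = mass h := by
  unfold avgStep
  rw [mass, lintegral_lintegral_swap]
  · simp only [mass_step hk, lintegral_const, unif_univ hε, mul_one]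
  · apply Measurable.aemeasurable; fun_prop

lemma avgStep_le_mass {E c ε : ℝ} (hε : 0 < ε) {h : ℝ × ℝ → ℝ≥0∞} (hk : HomNeg 2 h)
    {x : ℝ × ℝ} (hx : x.1 ≠ 0) :
    avgStep E c ε h x ≤
      (ENNReal.ofReal (2 * ε))⁻¹ * ((ENNReal.ofReal |x.1|)⁻¹ ^ 2 * mass h) := by
  unfold avgStep
  rw [lintegral_unif c hε]
  gcongr
  refine (setLIntegral_le_lintegral _ _).trans ?_
  have h1 : ∀ a, h ((E - a) * x.1 - x.2, x.1) =
      (ENNReal.ofReal |x.1|)⁻¹ ^ 2 * h ((E - x.2 / x.1) - a, 1) := by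
    intro a
    rw [hk.apply_of_ne hx]
    congr 3
    field_simp
    ring
  simp only [h1]
  rw [lintegral_const_mul' _ _ (by simp [hx]), mass,
    lintegral_sub_left_eq_self (fun t => h (t, 1))]

/-- The Euclidean norm of `x`, as an extended nonnegative real. -/
def radius (x : ℝ × ℝ) : ℝ≥0∞ := ENNReal.ofReal (√(x.1 ^ 2 + x.2 ^ 2))

lemma measurable_radius : Measurable radius := by unfold radius; fun_prop

lemma inv_sq_le_of_sq_le {x : ℝ × ℝ} {y C : ℝ} (hC : 0 < C) (hy : y ≠ 0)
    (h : x.1 ^ 2 + x.2 ^ 2 ≤ C * y ^ 2) :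
    (ENNReal.ofReal |y|)⁻¹ ^ 2 ≤ ENNReal.ofReal C * (radius x)⁻¹ ^ 2 := by
  rcases (by positivity : (0:ℝ) ≤ x.1 ^ 2 + x.2 ^ 2).eq_or_lt with h0 | h0
  · simp [radius, ← h0, hC]
  unfold radius
  rw [← ENNReal.inv_pow, ← ENNReal.inv_pow, ← ENNReal.ofReal_pow (abs_nonneg _),
    ← ENNReal.ofReal_pow (Real.sqrt_nonneg _), Real.sq_sqrt h0.le, sq_abs,
    ← ENNReal.ofReal_inv_of_pos (by positivity), ← ENNReal.ofReal_inv_of_pos h0,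
    ← ENNReal.ofReal_mul hC.le]
  refine ENNReal.ofReal_le_ofReal ?_
  rw [← div_eq_mul_inv, inv_eq_one_div, div_le_div_iff₀ (by positivity) h0]
  linarith

/-- Pointwise smoothing by two random steps. -/
lemma avgStep_avgStep_le {E c c' ε : ℝ} (hε : 0 < ε) (hE : |E - c| + ε ≤ 4)
    {h : ℝ × ℝ → ℝ≥0∞} (hk : HomNeg 2 h) (hh : Measurable h) {x : ℝ × ℝ}
    (hx0 : 0 < x.1 ^ 2 + x.2 ^ 2) :
    avgStep E c ε (avgStep E c' ε h) x ≤
      (ENNReal.ofReal (2 * ε))⁻¹ * (100 * (radius x)⁻¹ ^ 2 * mass h) := by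
  have hp := isProbabilityMeasure_unif c hε
  by_cases hx : x.1 ^ 2 + x.2 ^ 2 ≤ 100 * x.1 ^ 2
  · have hx1 : x.1 ≠ 0 := by
      intro h1
      rw [h1] at hx hx0
      linarith
    refine (avgStep_le_mass hε (hk.avgStep hh) hx1).trans ?_
    rw [mass_avgStep hε hk hh]
    gcongr
    simpa using inv_sq_le_of_sq_le (by norm_num : (0:ℝ) < 100) hx1 hx
  · push Not at hx
    rw [avgStep]
    refine (lintegral_mono_ae (g := fun _ => (ENNReal.ofReal (2 * ε))⁻¹ *
      (100 * (radius x)⁻¹ ^ 2 * mass h)) ?_).trans (by simp)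
    filter_upwards [ae_unif_mem c ε] with a ha
    have ha4 : |E - a| ≤ 4 := by
      have h1 : |c - a| ≤ ε := by rw [abs_le]; constructor <;> linarith [ha.1, ha.2]
      calc |E - a| = |(E - c) + (c - a)| := by ring_nf
        _ ≤ |E - c| + |c - a| := abs_add_le _ _
        _ ≤ 4 := by linarith
    have hb : x.1 ^ 2 + x.2 ^ 2 ≤ 100 * ((E - a) * x.1 - x.2) ^ 2 := by
      set b := E - a
      have hb2 : b ^ 2 ≤ 16 := by nlinarith [abs_le.1 ha4]
      have : (b * x.1) ^ 2 ≤ 16 * x.1 ^ 2 := by rw [mul_pow]; gcongr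
      nlinarith [sq_nonneg (x.2 - 2 * (b * x.1))]
    have hy : (E - a) * x.1 - x.2 ≠ 0 := by
      intro h0
      rw [h0] at hb
      nlinarith [sq_nonneg x.1, sq_nonneg x.2]
    refine (avgStep_le_mass hε hk (x := ((E - a) * x.1 - x.2, x.1)) hy).trans ?_
    gcongr
    simpa using inv_sq_le_of_sq_le (by norm_num : (0:ℝ) < 100) hy hb

/-! ### Convolution of projective densities with the uniform law -/

lemma sq_lintegral_le {X : Type*} [MeasurableSpace X] {ν : Measure X} [IsProbabilityMeasure ν]
    {φ : X → ℝ≥0∞} (hφ : AEMeasurable φ ν) : (∫⁻ a, φ a ∂ν) ^ 2 ≤ ∫⁻ a, φ a ^ 2 ∂ν := by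
  have h := ENNReal.lintegral_mul_le_Lp_mul_Lq ν (p := 2) (q := 2)
    (by constructor <;> norm_num) hφ (aemeasurable_const (b := (1 : ℝ≥0∞)))
  simp only [Pi.mul_apply, mul_one, ENNReal.one_rpow, lintegral_const, measure_univ] at h
  calc _ ≤ ((∫⁻ a, φ a ^ (2:ℝ) ∂ν) ^ (1 / (2:ℝ))) ^ 2 := by gcongr
    _ = _ := by
      rw [← ENNReal.rpow_natCast, ← ENNReal.rpow_mul]
      norm_num

lemma add_sq_add_tsub_sq_le (a b : ℝ≥0∞) : (a + b) ^ 2 + (a - b) ^ 2 ≤ 2 * (a ^ 2 + b ^ 2) := by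
  by_cases ha : a = ∞
  · simp [ha]
  by_cases hb : b = ∞
  · simp [hb]
  lift a to ℝ≥0 using ha
  lift b to ℝ≥0 using hb
  norm_cast
  rcases le_total a b with h | h
  · rw [tsub_eq_zero_of_le h, ← NNReal.coe_le_coe]
    push_cast
    nlinarith [sq_nonneg ((a:ℝ) - b)]
  · rw [← NNReal.coe_le_coe]
    push_cast [NNReal.coe_sub h]
    nlinarith

lemma lintegral_unif_half (c : ℝ) {ε : ℝ} (hε : 0 < ε) {g : ℝ → ℝ≥0∞} (hg : Measurable g) :
    2 * ∫⁻ a, g a ∂unif c ε = ∫⁻ a, (g a + g (a + ε)) ∂unif (c - ε / 2) (ε / 2) := by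
  rw [lintegral_unif c hε, lintegral_unif _ (half_pos hε), lintegral_add_left hg]
  have e1 : c - ε / 2 - ε / 2 = c - ε := by ring
  have e2 : c - ε / 2 + ε / 2 = c := by ring
  have e3 : (2:ℝ) * (ε / 2) = ε := by ring
  rw [e1, e2, e3]
  have h1 : ∫⁻ a in Set.Icc (c - ε) (c + ε), g a =
      (∫⁻ a in Set.Icc (c - ε) c, g a) + ∫⁻ a in Set.Icc c (c + ε), g a := by
    rw [← Set.Icc_union_Ioc_eq_Icc (by linarith : c - ε ≤ c) (by linarith : c ≤ c + ε),
      lintegral_union measurableSet_Ioc, restrict_Ioc_eq_restrict_Icc]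
    rw [Set.disjoint_left]
    intro x hx hx'
    exact absurd hx'.1 (not_lt.2 hx.2)
  have h2 : ∫⁻ a in Set.Icc (c - ε) c, g (a + ε) = ∫⁻ a in Set.Icc c (c + ε), g a := by
    have := (measurePreserving_add_right (volume : Measure ℝ) ε).setLIntegral_comp_preimage
      (measurableSet_Icc (a := c) (b := c + ε)) hg
    simpa using this
  rw [h1, h2, ← mul_assoc]
  congr 1
  rw [ENNReal.ofReal_mul (by norm_num), ENNReal.mul_inv (by simp) (by simp)]
  simp only [ENNReal.ofReal_ofNat]
  rw [← mul_assoc, ENNReal.mul_inv_cancel (by simp) (by simp), one_mul]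

/-- Convolution with the uniform distribution. -/
def conv (c ε : ℝ) (g : ℝ → ℝ≥0∞) (s : ℝ) : ℝ≥0∞ := ∫⁻ a, g (s - a) ∂unif c ε

lemma measurable_conv {c ε : ℝ} {g : ℝ → ℝ≥0∞} (hg : Measurable g) :
    Measurable (conv c ε g) := by
  unfold conv
  refine Measurable.lintegral_prod_right' (ν := unif c ε)
    (f := fun p : ℝ × ℝ => g (p.1 - p.2)) ?_
  fun_prop

lemma lintegral_conv_sq_add_le (c : ℝ) {ε : ℝ} (hε : 0 < ε) {g : ℝ → ℝ≥0∞}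
    (hg : Measurable g) :
    4 * (∫⁻ s, conv c ε g s ^ 2) + ∫⁻ s, (g s - g (s - ε)) ^ 2 ≤ 4 * ∫⁻ s, g s ^ 2 := by
  set ν := unif (c - ε / 2) (ε / 2) with hν
  have hp : IsProbabilityMeasure ν := isProbabilityMeasure_unif _ (half_pos hε)
  have h1 : 4 * (∫⁻ s, conv c ε g s ^ 2) ≤ ∫⁻ s, (g s + g (s - ε)) ^ 2 := by
    calc 4 * ∫⁻ s, conv c ε g s ^ 2 = ∫⁻ s, (2 * conv c ε g s) ^ 2 := by
          rw [← lintegral_const_mul _ ((measurable_conv hg).pow_const 2)]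
          refine lintegral_congr fun s => ?_
          rw [mul_pow]; norm_num
      _ ≤ ∫⁻ s, ∫⁻ a, (g (s - a) + g (s - (a + ε))) ^ 2 ∂ν := by
          refine lintegral_mono fun s => ?_
          rw [conv, lintegral_unif_half c hε (g := fun a => g (s - a)) (by fun_prop)]
          exact sq_lintegral_le (by fun_prop)
      _ = ∫⁻ a, (∫⁻ s, (g (s - a) + g (s - (a + ε))) ^ 2) ∂ν := by
          rw [lintegral_lintegral_swap (by apply Measurable.aemeasurable; fun_prop)]
      _ = _ := by
          have : ∀ a, ∫⁻ s, (g (s - a) + g (s - (a + ε))) ^ 2 =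
              ∫⁻ s, (g s + g (s - ε)) ^ 2 := by
            intro a
            rw [← lintegral_sub_right_eq_self (fun s => (g s + g (s - ε)) ^ 2) a]
            simp only [sub_sub, add_comm]
          simp [this]
  calc _ ≤ (∫⁻ s, (g s + g (s - ε)) ^ 2) + ∫⁻ s, (g s - g (s - ε)) ^ 2 := by gcongr
    _ = ∫⁻ s, ((g s + g (s - ε)) ^ 2 + (g s - g (s - ε)) ^ 2) :=
        (lintegral_add_left (by fun_prop) _).symm
    _ ≤ ∫⁻ s, 2 * (g s ^ 2 + g (s - ε) ^ 2) :=
        lintegral_mono fun s => add_sq_add_tsub_sq_le _ _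
    _ = 4 * ∫⁻ s, g s ^ 2 := by
        rw [lintegral_const_mul _ (by fun_prop), lintegral_add_left (by fun_prop),
          lintegral_sub_right_eq_self (fun s => g s ^ 2) ε]
        ring

lemma lintegral_conv_sq_le (c : ℝ) {ε : ℝ} (hε : 0 < ε) {g : ℝ → ℝ≥0∞}
    (hg : Measurable g) : ∫⁻ s, conv c ε g s ^ 2 ≤ ∫⁻ s, g s ^ 2 := by
  have h := le_self_add.trans (lintegral_conv_sq_add_le c hε hg)
  exact (ENNReal.mul_le_mul_iff_right (by norm_num) (by norm_num)).1 h

lemma conv_tsub_le (c ε : ℝ) {g : ℝ → ℝ≥0∞} (hg : Measurable g) (s : ℝ) :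
    conv c ε g s - conv c ε g (s - ε) ≤ conv c ε (fun s => g s - g (s - ε)) s := by
  unfold conv
  refine le_trans (le_of_eq ?_) (lintegral_sub_le _ _ (by fun_prop))
  simp only [sub_right_comm]

/-- A function with small positive increments cannot concentrate its square on a short window. -/
lemma lintegral_window_le {ε : ℝ} {n : ℕ} (hn : 2 ≤ n * ε) (b : ℝ) {g : ℝ → ℝ≥0∞}
    (hg : Measurable g) :
    4 * ∫⁻ s in Set.Ioc (b - 1) (b + 1), g s ^ 2 ≤
      (∫⁻ s, g s ^ 2) + 512 * (n : ℝ≥0∞) ^ 2 * ∫⁻ s, (g s - g (s - ε)) ^ 2 := by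
  set W := Set.Ioc (b - 1) (b + 1)
  set u : ℝ → ℝ≥0∞ := fun s => g s - g (s - ε) with hu
  have hum : Measurable u := by fun_prop
  have tele : ∀ (k : ℕ) (s : ℝ), g s ≤ g (s - k * ε) + ∑ i ∈ Finset.range k, u (s - i * ε) := by
    intro k s
    induction k with
    | zero => simp
    | succ k ih =>
      refine ih.trans ?_
      rw [Finset.sum_range_succ, add_comm (∑ i ∈ _, _), ← add_assoc]
      gcongr
      have : s - ((k + 1 : ℕ) : ℝ) * ε = s - k * ε - ε := by push_cast; ring
      rw [this, hu]
      exact le_add_tsub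
  have sqb : ∀ (k : ℕ) (s : ℝ), g s ^ 2 ≤
      2 * g (s - k * ε) ^ 2 + 2 * k * ∑ i ∈ Finset.range k, u (s - i * ε) ^ 2 := by
    intro k s
    have hs : (∑ i ∈ Finset.range k, u (s - i * ε)) ^ 2 ≤
        k * ∑ i ∈ Finset.range k, u (s - i * ε) ^ 2 := by
      have := ENNReal.inner_le_Lp_mul_Lq (Finset.range k) (fun i : ℕ => u (s - i * ε)) 1
        (p := 2) (q := 2) (by constructor <;> norm_num)
      simp only [Pi.one_apply, mul_one, ENNReal.one_rpow, Finset.sum_const, Finset.card_range,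
        nsmul_eq_mul] at this
      refine (pow_le_pow_left' this 2).trans (le_of_eq ?_)
      rw [mul_pow, ← ENNReal.rpow_natCast, ← ENNReal.rpow_natCast, ← ENNReal.rpow_mul,
        ← ENNReal.rpow_mul]
      norm_num
      rw [mul_comm]
    calc g s ^ 2 ≤ (g (s - k * ε) + ∑ i ∈ Finset.range k, u (s - i * ε)) ^ 2 := by
          gcongr; exact tele k s
      _ ≤ 2 * (g (s - k * ε) ^ 2 + (∑ i ∈ Finset.range k, u (s - i * ε)) ^ 2) :=
          le_self_add.trans (add_sq_add_tsub_sq_le _ _)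
      _ ≤ 2 * (g (s - k * ε) ^ 2 + k * ∑ i ∈ Finset.range k, u (s - i * ε) ^ 2) := by gcongr
      _ = _ := by ring
  have intb : ∀ k : ℕ, ∫⁻ s in W, g s ^ 2 ≤
      2 * (∫⁻ s in W, g (s - k * ε) ^ 2) + 2 * (k : ℝ≥0∞) ^ 2 * ∫⁻ s, u s ^ 2 := by
    intro k
    calc ∫⁻ s in W, g s ^ 2 ≤ ∫⁻ s in W,
          (2 * g (s - k * ε) ^ 2 + 2 * k * ∑ i ∈ Finset.range k, u (s - i * ε) ^ 2) :=
        lintegral_mono fun s => sqb k s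
      _ = 2 * (∫⁻ s in W, g (s - k * ε) ^ 2) +
          2 * k * ∑ i ∈ Finset.range k, ∫⁻ s in W, u (s - i * ε) ^ 2 := by
        rw [lintegral_add_left (by fun_prop), lintegral_const_mul _ (by fun_prop),
          lintegral_const_mul _ (by fun_prop), lintegral_finsetSum _ (fun i _ => by fun_prop)]
      _ ≤ 2 * (∫⁻ s in W, g (s - k * ε) ^ 2) +
          2 * k * ∑ i ∈ Finset.range k, ∫⁻ s, u s ^ 2 := by
        gcongr _ + 2 * _ * ∑ i ∈ Finset.range k, ?_ with i
        rw [← lintegral_sub_right_eq_self (fun s => u s ^ 2) (_ * ε)]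
        exact setLIntegral_le_lintegral _ _
      _ = _ := by
        simp only [Finset.sum_const, Finset.card_range, nsmul_eq_mul]
        ring
  have shift : ∀ k : ℕ, ∫⁻ s in W, g (s - k * ε) ^ 2 =
      ∫⁻ s in (fun s => s + k * ε) ⁻¹' W, g s ^ 2 := by
    intro k
    have := (measurePreserving_add_right (volume : Measure ℝ) (k * ε)).setLIntegral_comp_preimage
      (s := W) measurableSet_Ioc (f := fun s => g (s - k * ε) ^ 2) (by fun_prop)
    rw [← this]
    simp
  have disj : ∑ j ∈ Finset.range 8, ∫⁻ s in W, g (s - (j * n : ℕ) * ε) ^ 2 ≤ ∫⁻ s, g s ^ 2 := by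
    simp only [shift]
    rw [← lintegral_biUnion_finset]
    · exact setLIntegral_le_lintegral _ _
    · intro i _ j _ hij
      rw [Function.onFun, Set.disjoint_left]
      rintro s ⟨h1, h2⟩ ⟨h3, h4⟩
      simp only [Nat.cast_mul] at h1 h2 h3 h4
      rcases lt_or_gt_of_ne hij with h | h
      · have : (i:ℝ) + 1 ≤ j := by exact_mod_cast h
        nlinarith
      · have : (j:ℝ) + 1 ≤ i := by exact_mod_cast h
        nlinarith
    · intro i _
      exact measurableSet_Ioc.preimage (by fun_prop)
  have tot : 8 * ∫⁻ s in W, g s ^ 2 ≤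
      2 * (∫⁻ s, g s ^ 2) + 1024 * (n : ℝ≥0∞) ^ 2 * ∫⁻ s, u s ^ 2 := by
    calc 8 * ∫⁻ s in W, g s ^ 2 = ∑ j ∈ Finset.range 8, ∫⁻ s in W, g s ^ 2 := by simp
      _ ≤ ∑ j ∈ Finset.range 8, (2 * (∫⁻ s in W, g (s - (j * n : ℕ) * ε) ^ 2) +
          2 * (8 * n : ℝ≥0∞) ^ 2 * ∫⁻ s, u s ^ 2) := by
        refine Finset.sum_le_sum fun j hj => (intb (j * n)).trans ?_
        have : ((j * n : ℕ) : ℝ≥0∞) ≤ 8 * n := by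
          exact_mod_cast Nat.mul_le_mul_right n (Finset.mem_range.1 hj).le
        gcongr
      _ = 2 * ∑ j ∈ Finset.range 8, (∫⁻ s in W, g (s - (j * n : ℕ) * ε) ^ 2) +
          1024 * (n : ℝ≥0∞) ^ 2 * ∫⁻ s, u s ^ 2 := by
        rw [Finset.sum_add_distrib, ← Finset.mul_sum]
        simp only [Finset.sum_const, Finset.card_range, nsmul_eq_mul]
        push_cast
        ring
      _ ≤ _ := by gcongr
  refine (ENNReal.mul_le_mul_iff_right (a := 2) (by norm_num) (by norm_num)).1 ?_
  calc 2 * (4 * ∫⁻ s in W, g s ^ 2) = 8 * ∫⁻ s in W, g s ^ 2 := by ring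
    _ ≤ _ := tot
    _ = _ := by ring

/-! ### Decay of iterated averages -/

lemma avgStep_apply_one {E c ε : ℝ} {f : ℝ × ℝ → ℝ≥0∞} (hk : HomNeg 1 f) {t : ℝ}
    (ht : t ≠ 0) :
    avgStep E c ε f (t, 1) =
      (ENNReal.ofReal |t|)⁻¹ * conv c ε (fun s => f (s, 1)) (E - t⁻¹) := by
  unfold avgStep conv
  rw [← lintegral_const_mul' _ _ (by simp [ht])]
  refine lintegral_congr fun a => ?_
  rw [hk.apply_of_ne ht, pow_one]
  congr 3
  field_simp
  ring

lemma mass_sq_avgStep {E c ε : ℝ} {f : ℝ × ℝ → ℝ≥0∞} (hk : HomNeg 1 f) :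
    ∫⁻ t, avgStep E c ε f (t, 1) ^ 2 = ∫⁻ s, conv c ε (fun s => f (s, 1)) s ^ 2 := by
  rw [← lintegral_sub_inv_univ E (fun s => conv c ε (fun s => f (s, 1)) s ^ 2)]
  refine lintegral_congr_ae ?_
  filter_upwards [ae_ne_zero] with t ht
  rw [avgStep_apply_one hk ht, mul_pow]

lemma image_sub_inv_Ioc (E : ℝ) : (fun t : ℝ => E - t⁻¹) '' (Set.Ioc (0 - 1) (0 + 1) \ {0}) =
    (Set.Ioc (E - 1) (E + 1))ᶜ := by
  ext s
  simp only [Set.mem_image, Set.mem_sdiff, Set.mem_Ioc, Set.mem_singleton_iff, Set.mem_compl_iff,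
    zero_sub, zero_add]
  constructor
  · rintro ⟨t, ⟨⟨h1, h2⟩, h0⟩, rfl⟩ ⟨h3, h4⟩
    have hm : t * t⁻¹ = 1 := mul_inv_cancel₀ h0
    rcases lt_or_gt_of_ne h0 with h | h
    · nlinarith
    · nlinarith
  · intro h
    have h0 : E - s ≠ 0 := by
      intro h'
      exact h ⟨by linarith, by linarith⟩
    refine ⟨(E - s)⁻¹, ⟨?_, inv_ne_zero h0⟩, by simp⟩
    have hm : (E - s) * (E - s)⁻¹ = 1 := mul_inv_cancel₀ h0
    by_cases h1 : E - 1 < s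
    · have h2 : E + 1 < s := by
        by_contra h3
        exact h ⟨h1, not_lt.1 h3⟩
      have : (E - s)⁻¹ < 0 := inv_lt_zero.2 (by linarith)
      constructor <;> nlinarith
    · have : 0 < (E - s)⁻¹ := inv_pos.2 (by linarith)
      constructor <;> nlinarith

lemma window_sq_avgStep {E c ε : ℝ} {f : ℝ × ℝ → ℝ≥0∞} (hk : HomNeg 1 f) :
    ∫⁻ t in Set.Ioc (0 - 1) (0 + 1), avgStep E c ε f (t, 1) ^ 2 =
      ∫⁻ s in (Set.Ioc (E - 1) (E + 1))ᶜ, conv c ε (fun s => f (s, 1)) s ^ 2 := by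
  have hS : MeasurableSet (Set.Ioc ((0:ℝ) - 1) (0 + 1) \ {0}) :=
    measurableSet_Ioc.diff (measurableSet_singleton 0)
  have hae : (Set.Ioc ((0:ℝ) - 1) (0 + 1) \ {0} : Set ℝ) =ᵐ[volume] Set.Ioc ((0:ℝ) - 1) (0 + 1) :=
    sdiff_null_ae_eq_self (by simp)
  rw [← image_sub_inv_Ioc, ← lintegral_sub_inv E _ hS (by simp), ← setLIntegral_congr hae]
  refine setLIntegral_congr_fun hS fun t ht => ?_
  have h0 : t ≠ 0 := fun h => ht.2 h
  rw [avgStep_apply_one hk h0, mul_pow]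

/-- Two random steps strictly contract the `L²` norm on functions of degree `-1`. -/
lemma avgStep_avgStep_contract {E c c' ε : ℝ} (hε : 0 < ε) {n : ℕ} (hn : 2 ≤ n * ε)
    {f : ℝ × ℝ → ℝ≥0∞} (hk : HomNeg 1 f) (hf : Measurable f)
    (hfin : ∫⁻ t, f (t, 1) ^ 2 ≠ ∞) :
    (4 * (512 * (n : ℝ≥0∞) ^ 2) + 2) *
        ∫⁻ t, avgStep E c ε (avgStep E c' ε f) (t, 1) ^ 2 ≤
      4 * (512 * (n : ℝ≥0∞) ^ 2) * ∫⁻ t, f (t, 1) ^ 2 := by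
  set g : ℝ → ℝ≥0∞ := fun s => f (s, 1) with hg
  have hgm : Measurable g := by fun_prop
  set h := conv c' ε g with hh
  have hhm : Measurable h := measurable_conv hgm
  have hkm := measurable_avgStep (E := E) (c := c') (ε := ε) hf
  set k : ℝ → ℝ≥0∞ := fun t => avgStep E c' ε f (t, 1) with hkdef
  have hk1m : Measurable k := by fun_prop
  have hkk := hk.avgStep (E := E) (c := c') (ε := ε) hf
  rw [mass_sq_avgStep hkk]
  set D : ℝ≥0∞ := 512 * (n : ℝ≥0∞) ^ 2 with hD
  have hDfin : D ≠ ∞ := by rw [hD]; finiteness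
  set G := ∫⁻ s, g s ^ 2
  set H := ∫⁻ s, h s ^ 2
  set X := ∫⁻ s, (g s - g (s - ε)) ^ 2
  set Y := ∫⁻ s, (k s - k (s - ε)) ^ 2
  set Z := ∫⁻ s, conv c ε k s ^ 2
  have eH : ∫⁻ t, k t ^ 2 = H := mass_sq_avgStep hk
  have b1 : 4 * H + X ≤ 4 * G := lintegral_conv_sq_add_le c' hε hgm
  have b2 : 4 * Z + Y ≤ 4 * H := by
    rw [← eH]; exact lintegral_conv_sq_add_le c hε hk1m
  have b3 : 4 * ∫⁻ s in (Set.Ioc (E - 1) (E + 1))ᶜ, h s ^ 2 ≤ H + D * Y := by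
    rw [← eH, ← window_sq_avgStep hk]
    exact lintegral_window_le hn 0 hk1m
  have b4 : 4 * ∫⁻ s in Set.Ioc (E - 1) (E + 1), h s ^ 2 ≤ H + D * X := by
    refine (lintegral_window_le hn E hhm).trans ?_
    gcongr H + D * ?_
    calc _ ≤ ∫⁻ s, conv c' ε (fun s => g s - g (s - ε)) s ^ 2 := by
          gcongr with s
          exact conv_tsub_le c' ε hgm s
      _ ≤ _ := lintegral_conv_sq_le c' hε (by fun_prop)
  have b5 : (∫⁻ s in Set.Ioc (E - 1) (E + 1), h s ^ 2) +
      ∫⁻ s in (Set.Ioc (E - 1) (E + 1))ᶜ, h s ^ 2 = H :=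
    lintegral_add_compl _ measurableSet_Ioc
  have hG : 4 * G ≠ ∞ := ENNReal.mul_ne_top (by simp) hfin
  have h4H : 4 * H ≠ ∞ := ne_top_of_le_ne_top hG (le_self_add.trans b1)
  have hH : H ≠ ∞ := fun h => h4H (by rw [h]; simp)
  have b6 : 4 * H ≤ 2 * H + D * (X + Y) := by
    calc 4 * H = 4 * (∫⁻ s in Set.Ioc (E - 1) (E + 1), h s ^ 2) +
          4 * ∫⁻ s in (Set.Ioc (E - 1) (E + 1))ᶜ, h s ^ 2 := by rw [← b5, mul_add]
      _ ≤ (H + D * X) + (H + D * Y) := add_le_add b4 b3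
      _ = _ := by ring
  have b7 : 2 * H ≤ D * (X + Y) := by
    have : 2 * H + 2 * H ≤ 2 * H + D * (X + Y) := by
      calc _ = 4 * H := by ring
        _ ≤ _ := b6
    exact (ENNReal.add_le_add_iff_left (ENNReal.mul_ne_top (by simp) hH)).1 this
  have b8 : 4 * Z + (X + Y) ≤ 4 * G := by
    calc 4 * Z + (X + Y) = (4 * Z + Y) + X := by ring
      _ ≤ 4 * H + X := by gcongr
      _ ≤ _ := b1
  have b9 : 4 * Z ≤ 4 * H := le_self_add.trans b2
  have b10 : Z ≤ H := (ENNReal.mul_le_mul_iff_right (by norm_num) (by norm_num)).1 b9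
  calc (4 * D + 2) * Z = 4 * D * Z + 2 * Z := by ring
    _ ≤ 4 * D * Z + 2 * H := by gcongr
    _ ≤ 4 * D * Z + D * (X + Y) := by gcongr
    _ = D * (4 * Z + (X + Y)) := by ring
    _ ≤ D * (4 * G) := by gcongr
    _ = _ := by ring

/-- Averaging over `l` random transfer steps with noise centred at `c n₀, …, c (n₀ + l - 1)`. -/
def iterAvg (c : ℕ → ℝ) (E ε : ℝ) (n₀ : ℕ) : ℕ → (ℝ × ℝ → ℝ≥0∞) → ℝ × ℝ → ℝ≥0∞
  | 0, h => h
  | l + 1, h => iterAvg c E ε n₀ l (avgStep E (c (n₀ + l)) ε h)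

section
variable {c : ℕ → ℝ} {E ε : ℝ}

lemma measurable_iterAvg (n₀ l : ℕ) {h : ℝ × ℝ → ℝ≥0∞} (hh : Measurable h) :
    Measurable (iterAvg c E ε n₀ l h) := by
  induction l generalizing h with
  | zero => exact hh
  | succ l ih => exact ih (measurable_avgStep hh)

lemma HomNeg.iterAvg {k : ℕ} (n₀ l : ℕ) {h : ℝ × ℝ → ℝ≥0∞} (hk : HomNeg k h)
    (hh : Measurable h) : HomNeg k (iterAvg c E ε n₀ l h) := by
  induction l generalizing h with
  | zero => exact hk
  | succ l ih => exact ih (hk.avgStep hh) (measurable_avgStep hh)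

lemma mass_iterAvg (hε : 0 < ε) (n₀ l : ℕ) {h : ℝ × ℝ → ℝ≥0∞} (hk : HomNeg 2 h)
    (hh : Measurable h) : mass (iterAvg c E ε n₀ l h) = mass h := by
  induction l generalizing h with
  | zero => rfl
  | succ l ih =>
    rw [← mass_avgStep (E := E) (c := c (n₀ + l)) hε hk hh]
    exact ih (hk.avgStep hh) (measurable_avgStep hh)

lemma iterAvg_succ (n₀ l : ℕ) (h : ℝ × ℝ → ℝ≥0∞) :
    iterAvg c E ε n₀ (l + 1) h = avgStep E (c n₀) ε (iterAvg c E ε (n₀ + 1) l h) := by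
  induction l generalizing h with
  | zero => rfl
  | succ l ih =>
    rw [iterAvg, ih, iterAvg]
    congr 4
    ring

lemma avgStep_sq_le {a : ℝ} (hε : 0 < ε) {h : ℝ × ℝ → ℝ≥0∞} (hh : Measurable h)
    (x : ℝ × ℝ) : avgStep E a ε h x ^ 2 ≤ avgStep E a ε (fun x => h x ^ 2) x := by
  have := isProbabilityMeasure_unif a hε
  exact sq_lintegral_le (by fun_prop)

lemma mass_sq_iterAvg_le (hε : 0 < ε) {n : ℕ} (hn : 2 ≤ n * ε) (n₀ l : ℕ)
    {f : ℝ × ℝ → ℝ≥0∞} (hk : HomNeg 1 f) (hf : Measurable f)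
    (hfin : ∫⁻ t, f (t, 1) ^ 2 ≠ ∞) :
    ∫⁻ t, iterAvg c E ε n₀ l f (t, 1) ^ 2 ≤
      (4 * (512 * (n : ℝ≥0∞) ^ 2) / (4 * (512 * (n : ℝ≥0∞) ^ 2) + 2)) ^ (l / 2) *
        ∫⁻ t, f (t, 1) ^ 2 := by
  induction l using Nat.twoStepInduction generalizing f with
  | zero => simp [iterAvg]
  | one =>
    simp only [iterAvg, Nat.reduceDiv, pow_zero, one_mul]
    rw [mass_sq_avgStep hk]
    exact lintegral_conv_sq_le _ hε (by fun_prop)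
  | more l ih _ =>
    have hc := avgStep_avgStep_contract (E := E) (c := c (n₀ + l)) (c' := c (n₀ + (l + 1)))
      hε hn hk hf hfin
    set q : ℝ≥0∞ := 4 * (512 * (n : ℝ≥0∞) ^ 2)
    have hc' : ∫⁻ t, avgStep E (c (n₀ + l)) ε (avgStep E (c (n₀ + (l + 1))) ε f) (t, 1) ^ 2 ≤
        q / (q + 2) * ∫⁻ t, f (t, 1) ^ 2 := by
      rw [← ENNReal.mul_div_right_comm]
      rw [ENNReal.le_div_iff_mul_le (by simp) (by left; finiteness), mul_comm]
      exact hc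
    have hq1 : q / (q + 2) ≠ ∞ := ENNReal.div_ne_top (by finiteness) (by simp)
    rw [iterAvg, iterAvg]
    have h2 : (l + 2) / 2 = l / 2 + 1 := by omega
    refine (ih ((hk.avgStep hf).avgStep (measurable_avgStep hf))
      (measurable_avgStep (measurable_avgStep hf))
      (ne_top_of_le_ne_top (ENNReal.mul_ne_top hq1 hfin) hc')).trans ?_
    rw [h2, pow_succ, mul_assoc]
    gcongr

end

lemma homNeg_inv_radius : HomNeg 1 (fun x => (radius x)⁻¹) := by
  intro d hd x
  have : √((d * x.1) ^ 2 + (d * x.2) ^ 2) = |d| * √(x.1 ^ 2 + x.2 ^ 2) := by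
    rw [← Real.sqrt_sq_eq_abs, ← Real.sqrt_mul (sq_nonneg d)]
    ring_nf
  simp only [radius, this, pow_one]
  rw [ENNReal.ofReal_mul (abs_nonneg _), ENNReal.mul_inv (by simp [hd]) (by simp)]

lemma lintegral_radius_ne_top : ∫⁻ t : ℝ, (radius (t, 1))⁻¹ ^ 2 ≠ ∞ := by
  have h : ∀ t : ℝ, (radius (t, 1))⁻¹ ^ 2 = ENNReal.ofReal ((1 + t ^ 2)⁻¹) := by
    intro t
    rw [radius, ← ENNReal.inv_pow, ← ENNReal.ofReal_pow (Real.sqrt_nonneg _),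
      Real.sq_sqrt (by positivity), ENNReal.ofReal_inv_of_pos (by positivity)]
    congr 2
    ring
  simp only [h]
  exact integrable_inv_one_add_sq.lintegral_lt_top.ne

lemma inv_radius_step_le {b : ℝ} (hb : |b| ≤ 4) {x : ℝ × ℝ} (hx : 0 < x.1 ^ 2 + x.2 ^ 2) :
    (radius (b * x.1 - x.2, x.1))⁻¹ ≤ 10 * (radius x)⁻¹ := by
  have hb2 : b ^ 2 ≤ 16 := by nlinarith [abs_le.1 hb]
  have h1 : (b * x.1) ^ 2 ≤ 16 * x.1 ^ 2 := by rw [mul_pow]; gcongr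
  have h2 : x.1 ^ 2 + x.2 ^ 2 ≤ 100 * ((b * x.1 - x.2) ^ 2 + x.1 ^ 2) := by
    nlinarith [sq_nonneg (x.2 - 2 * (b * x.1))]
  have h3 : √(x.1 ^ 2 + x.2 ^ 2) ≤ 10 * √((b * x.1 - x.2) ^ 2 + x.1 ^ 2) := by
    rw [show (10:ℝ) = √(100) by rw [show (100:ℝ) = 10 ^ 2 by norm_num]; simp,
      ← Real.sqrt_mul (by norm_num)]
    exact Real.sqrt_le_sqrt h2
  have h4 : radius x ≤ 10 * radius (b * x.1 - x.2, x.1) := by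
    unfold radius
    rw [show (10:ℝ≥0∞) = ENNReal.ofReal 10 by simp, ← ENNReal.ofReal_mul (by norm_num)]
    exact ENNReal.ofReal_le_ofReal h3
  have h5 := ENNReal.inv_le_inv.2 h4
  rw [ENNReal.mul_inv (by simp) (by simp)] at h5
  calc (radius (b * x.1 - x.2, x.1))⁻¹ = 10 * (10⁻¹ * (radius (b * x.1 - x.2, x.1))⁻¹) := by
        rw [← mul_assoc, ENNReal.mul_inv_cancel (by simp) (by simp), one_mul]
    _ ≤ _ := by gcongr

lemma abs_sub_le_of_mem {E c ε a : ℝ} (hE : |E - c| + ε ≤ 4) (ha : a ∈ Set.Icc (c - ε) (c + ε)) :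
    |E - a| ≤ 4 := by
  have h1 : |c - a| ≤ ε := by rw [abs_le]; constructor <;> linarith [ha.1, ha.2]
  calc |E - a| = |(E - c) + (c - a)| := by ring_nf
    _ ≤ |E - c| + |c - a| := abs_add_le _ _
    _ ≤ 4 := by linarith

lemma avgStep_inv_radius_pow_le {E c ε : ℝ} (hε : 0 < ε) (hE : |E - c| + ε ≤ 4) (k : ℕ)
    {x : ℝ × ℝ} (hx : 0 < x.1 ^ 2 + x.2 ^ 2) :
    avgStep E c ε (fun x => (radius x)⁻¹ ^ k) x ≤ 10 ^ k * (radius x)⁻¹ ^ k := by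
  have := isProbabilityMeasure_unif c hε
  rw [avgStep]
  refine (lintegral_mono_ae (g := fun _ => 10 ^ k * (radius x)⁻¹ ^ k) ?_).trans (by simp)
  filter_upwards [ae_unif_mem c ε] with a ha
  rw [← mul_pow]
  gcongr
  exact inv_radius_step_le (abs_sub_le_of_mem hE ha) hx

lemma tsum_pow_half_ne_top {q : ℝ≥0∞} (hq : q < 1) : ∑' m : ℕ, q ^ (m / 2) ≠ ∞ := by
  rw [← tsum_even_add_odd ENNReal.summable ENNReal.summable]
  have h1 : ∀ k : ℕ, (2 * k + 1) / 2 = k := by intro k; omega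
  have h2 : ∀ k : ℕ, 2 * k / 2 = k := by intro k; omega
  simp only [h1, h2, ENNReal.tsum_geometric]
  have : 1 - q ≠ 0 := (tsub_pos_of_lt hq).ne'
  simp [this]

/-- Uniform bounds for averages of negative powers of the norm of transfer matrices. -/
theorem exists_transfer_bounds {ε : ℝ} (hε : 0 < ε) :
    ∃ (C : ℝ≥0∞) (β : ℕ → ℝ≥0∞), C ≠ ∞ ∧ ∑' l, β l ≠ ∞ ∧
      ∀ (c : ℕ → ℝ) (E : ℝ), (∀ n, |E - c n| + ε ≤ 4) → ∀ (n₀ l : ℕ) (x : ℝ × ℝ),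
        0 < x.1 ^ 2 + x.2 ^ 2 →
        iterAvg c E ε n₀ l (fun x => (radius x)⁻¹ ^ 2) x ≤ C * (radius x)⁻¹ ^ 2 ∧
        iterAvg c E ε n₀ l (fun x => (radius x)⁻¹) x ≤ β l * (radius x)⁻¹ := by
  obtain ⟨n, hn⟩ := exists_nat_ge (2 / ε)
  have hn : 2 ≤ n * ε := by rwa [div_le_iff₀ hε] at hn
  set q : ℝ≥0∞ := 4 * (512 * (n : ℝ≥0∞) ^ 2) / (4 * (512 * (n : ℝ≥0∞) ^ 2) + 2) with hq
  have hq1 : q < 1 := by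
    rw [hq]
    refine ENNReal.div_lt_of_lt_mul ?_
    rw [one_mul]
    exact ENNReal.lt_add_right (by finiteness) (by simp)
  set M : ℝ≥0∞ := ∫⁻ t : ℝ, (radius (t, 1))⁻¹ ^ 2 with hM
  have hMfin : M ≠ ∞ := lintegral_radius_ne_top
  set C₀ : ℝ≥0∞ := (ENNReal.ofReal (2 * ε))⁻¹ * (100 * M) with hC₀
  have hC₀fin : C₀ ≠ ∞ := ENNReal.mul_ne_top (by simpa using hε)
    (ENNReal.mul_ne_top (by simp) hMfin)
  have hr : Measurable (fun x => (radius x)⁻¹) := measurable_radius.inv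
  have hr2 : Measurable (fun x => (radius x)⁻¹ ^ 2) := hr.pow_const 2
  have hsq := homNeg_inv_radius.sq
  have hq2 : q ^ (1 / 2 : ℝ) < 1 := ENNReal.rpow_lt_one hq1 (by norm_num)
  refine ⟨C₀ + 100, fun l => if l < 2 then 10 else
    C₀ ^ (1 / 2 : ℝ) * (q ^ (1 / 2 : ℝ)) ^ ((l - 2) / 2), by finiteness, ?_, ?_⟩
  · rw [← Summable.sum_add_tsum_nat_add' (k := 2) ENNReal.summable]
    have : ∀ i : ℕ, ¬ (i + 2 < 2) := by intro i; omega
    simp only [this, if_false, Nat.add_sub_cancel, ENNReal.tsum_mul_left]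
    refine ENNReal.add_ne_top.2 ⟨?_, ENNReal.mul_ne_top (by finiteness)
      (tsum_pow_half_ne_top hq2)⟩
    simp [Finset.sum_range_succ]
  · intro c E hE n₀ l x hx
    match l with
    | 0 =>
      simp only [iterAvg]
      refine ⟨le_mul_of_one_le_left' ?_, le_mul_of_one_le_left' (by simp)⟩
      exact le_add_left (by norm_num)
    | 1 =>
      simp only [iterAvg]
      constructor
      · refine (avgStep_inv_radius_pow_le hε (hE _) 2 hx).trans ?_
        gcongr
        norm_num
      · simpa using avgStep_inv_radius_pow_le hε (hE (n₀ + 0)) 1 hx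
    | m + 2 =>
      constructor
      · rw [iterAvg_succ, iterAvg_succ]
        refine (avgStep_avgStep_le hε (hE _) (hsq.iterAvg _ _ hr2) (measurable_iterAvg _ _ hr2)
          hx).trans ?_
        rw [mass_iterAvg hε _ _ hsq hr2]
        calc _ = C₀ * (radius x)⁻¹ ^ 2 := by rw [hC₀, mass]; ring
          _ ≤ _ := by gcongr; exact le_self_add
      · have hm2 : ¬ (m + 2 < 2) := by omega
        simp only [hm2, if_false, Nat.add_sub_cancel]
        set f := iterAvg c E ε (n₀ + 1 + 1) m (fun x => (radius x)⁻¹) with hf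
        have hfm : Measurable f := measurable_iterAvg _ _ hr
        have hfh : HomNeg 1 f := homNeg_inv_radius.iterAvg _ _ hr
        rw [iterAvg_succ, iterAvg_succ, ← hf]
        have hb : avgStep E (c n₀) ε (avgStep E (c (n₀ + 1)) ε f) x ^ 2 ≤
            C₀ * q ^ (m / 2) * (radius x)⁻¹ ^ 2 := by
          calc _ ≤ avgStep E (c n₀) ε (fun y => avgStep E (c (n₀ + 1)) ε f y ^ 2) x :=
                avgStep_sq_le hε (measurable_avgStep hfm) x
            _ ≤ avgStep E (c n₀) ε (avgStep E (c (n₀ + 1)) ε (fun y => f y ^ 2)) x := by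
                refine lintegral_mono fun a => ?_
                exact avgStep_sq_le hε hfm _
            _ ≤ _ := avgStep_avgStep_le hε (hE _) hfh.sq (hfm.pow_const 2) hx
            _ ≤ (ENNReal.ofReal (2 * ε))⁻¹ * (100 * (radius x)⁻¹ ^ 2 * (q ^ (m / 2) * M)) := by
                gcongr
                exact mass_sq_iterAvg_le hε hn _ _ homNeg_inv_radius hr hMfin
            _ = _ := by rw [hC₀]; ring
        have hb2 := ENNReal.rpow_le_rpow hb (by norm_num : (0:ℝ) ≤ 1 / 2)
        rw [ENNReal.mul_rpow_of_nonneg _ _ (by norm_num),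
          ENNReal.mul_rpow_of_nonneg _ _ (by norm_num), ← ENNReal.rpow_natCast,
          ← ENNReal.rpow_natCast, ← ENNReal.rpow_natCast, ← ENNReal.rpow_mul, ← ENNReal.rpow_mul,
          ← ENNReal.rpow_mul] at hb2
        rw [← ENNReal.rpow_natCast, ← ENNReal.rpow_mul]
        norm_num at hb2
        refine hb2.trans (le_of_eq ?_)
        congr 3
        ring

/-! ### Solutions, their mass, and its fractions -/

open Polynomial Finset

section Solutions

/-- Half-line solutions with boundary condition `σ`, as polynomials in the energy; the value at
site `n ≥ 0` is `solPoly σ v (n + 1)`. -/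
def solPoly (σ : ℝ) (v : ℕ → ℝ) : ℕ → ℝ[X]
  | 0 => C σ
  | 1 => 1
  | n + 2 => (X - C (v n)) * solPoly σ v (n + 1) - solPoly σ v n

/-- The value of `solPoly` at the energy `E`. -/
def sol (σ : ℝ) (v : ℕ → ℝ) (E : ℝ) (n : ℕ) : ℝ := (solPoly σ v n).eval E

variable {σ : ℝ} {v w : ℕ → ℝ} {E : ℝ}

@[simp] lemma sol_zero : sol σ v E 0 = σ := by simp [sol, solPoly]

@[simp] lemma sol_one : sol σ v E 1 = 1 := by simp [sol, solPoly]

lemma sol_add_two (n : ℕ) : sol σ v E (n + 2) = (E - v n) * sol σ v E (n + 1) - sol σ v E n := by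
  simp [sol, solPoly]

lemma solPoly_congr {n : ℕ} (h : ∀ i, i + 1 < n → v i = w i) :
    solPoly σ v n = solPoly σ w n := by
  induction n using Nat.twoStepInduction with
  | zero => rfl
  | one => rfl
  | more n ih1 ih2 =>
    rw [solPoly, solPoly, ih1 fun i hi => h i (by omega), ih2 fun i hi => h i (by omega),
      h n (by omega)]

lemma sol_congr {n : ℕ} (h : ∀ i, i + 1 < n → v i = w i) : sol σ v E n = sol σ w E n := by
  rw [sol, sol, solPoly_congr h]

lemma continuous_sol (n : ℕ) : Continuous fun p : (ℕ → ℝ) × ℝ => sol σ p.1 p.2 n := by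
  induction n using Nat.twoStepInduction with
  | zero => simpa using continuous_const
  | one => simpa using continuous_const
  | more n ih1 ih2 =>
    simp only [sol_add_two]
    fun_prop

lemma measurable_sol {X : Type*} [MeasurableSpace X] {a : X → ℕ → ℝ} {b : X → ℝ}
    (ha : Measurable a) (hb : Measurable b) (n : ℕ) : Measurable fun x => sol σ (a x) (b x) n :=
  (continuous_sol n).measurable.comp (ha.prodMk hb)

/-- The pair of consecutive values determined by the first `n` potential values. -/
def state (σ : ℝ) (v : ℕ → ℝ) (E : ℝ) (n : ℕ) : ℝ × ℝ := (sol σ v E (n + 1), sol σ v E n)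

lemma state_sq_pos (n : ℕ) : 0 < (state σ v E n).1 ^ 2 + (state σ v E n).2 ^ 2 := by
  induction n with
  | zero => simp only [state, zero_add, sol_one, sol_zero]; positivity
  | succ n ih =>
    simp only [state, sol_add_two] at ih ⊢
    set a := sol σ v E (n + 1)
    by_contra h
    have ha : a = 0 := by nlinarith [sq_nonneg ((E - v n) * a - sol σ v E n), sq_nonneg a]
    rw [ha] at h ih
    apply h
    nlinarith

lemma state_congr {n : ℕ} (h : ∀ i < n, v i = w i) : state σ v E n = state σ w E n := by
  rw [state, state, sol_congr fun i hi => h i (by omega), sol_congr fun i hi => h i (by omega)]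

/-- The sum of squares of the values determined by the first `n` potential values. -/
def sumSq (σ : ℝ) (v : ℕ → ℝ) (E : ℝ) (n : ℕ) : ℝ := ∑ i ∈ range (n + 2), sol σ v E i ^ 2

lemma one_le_sumSq (n : ℕ) : 1 ≤ sumSq σ v E n := by
  have h : sol σ v E 1 ^ 2 ≤ sumSq σ v E n :=
    single_le_sum (f := fun i => sol σ v E i ^ 2) (fun i _ => sq_nonneg _) (by simp)
  simpa using h

lemma sumSq_pos (n : ℕ) : 0 < sumSq σ v E n := zero_lt_one.trans_le (one_le_sumSq n)

lemma sumSq_add (n l : ℕ) :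
    sumSq σ v E (n + l) = sumSq σ v E n + ∑ j ∈ range l, sol σ v E (n + 2 + j) ^ 2 := by
  rw [sumSq, sumSq, show n + l + 2 = n + 2 + l by ring, sum_range_add]

lemma sumSq_mono {m n : ℕ} (h : m ≤ n) : sumSq σ v E m ≤ sumSq σ v E n := by
  obtain ⟨l, rfl⟩ := Nat.exists_eq_add_of_le h
  rw [sumSq_add]
  exact le_add_of_nonneg_right (sum_nonneg fun i _ => sq_nonneg _)

lemma sumSq_congr {n : ℕ} (h : ∀ i < n, v i = w i) : sumSq σ v E n = sumSq σ w E n :=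
  sum_congr rfl fun i hi => by
    rw [sol_congr fun k hk => h k (by have := mem_range.1 hi; omega)]

lemma measurable_sumSq {X : Type*} [MeasurableSpace X] {a : X → ℕ → ℝ} {b : X → ℝ}
    (ha : Measurable a) (hb : Measurable b) (n : ℕ) :
    Measurable fun x => sumSq σ (a x) (b x) n := by
  unfold sumSq
  exact Finset.measurable_fun_sum _ fun i _ => (measurable_sol ha hb i).pow_const 2

/-- Inverse norm of the state. -/
def rinv (σ : ℝ) (v : ℕ → ℝ) (E : ℝ) (n : ℕ) : ℝ≥0∞ := (radius (state σ v E n))⁻¹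

/-- Inverse norm of the whole solution up to `n`. -/
def tinv (σ : ℝ) (v : ℕ → ℝ) (E : ℝ) (n : ℕ) : ℝ≥0∞ := (ENNReal.ofReal (√(sumSq σ v E n)))⁻¹

/-- The fraction of the mass up to `n` that lies beyond `m`. -/
def frac (σ : ℝ) (v : ℕ → ℝ) (E : ℝ) (m n : ℕ) : ℝ := 1 - sumSq σ v E m / sumSq σ v E n

lemma measurable_rinv {X : Type*} [MeasurableSpace X] {a : X → ℕ → ℝ} {b : X → ℝ}
    (ha : Measurable a) (hb : Measurable b) (n : ℕ) :
    Measurable fun x => rinv σ (a x) (b x) n :=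
  (measurable_radius.comp ((measurable_sol ha hb (n + 1)).prodMk (measurable_sol ha hb n))).inv

lemma measurable_tinv {X : Type*} [MeasurableSpace X] {a : X → ℕ → ℝ} {b : X → ℝ}
    (ha : Measurable a) (hb : Measurable b) (n : ℕ) :
    Measurable fun x => tinv σ (a x) (b x) n :=
  (measurable_sumSq ha hb n).sqrt.ennreal_ofReal.inv

lemma measurable_frac {X : Type*} [MeasurableSpace X] {a : X → ℕ → ℝ} {b : X → ℝ}
    (ha : Measurable a) (hb : Measurable b) (m n : ℕ) :
    Measurable fun x => frac σ (a x) (b x) m n :=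
  ((measurable_sumSq ha hb m).div (measurable_sumSq ha hb n)).const_sub 1

lemma frac_nonneg {m n : ℕ} (h : m ≤ n) : 0 ≤ frac σ v E m n := by
  rw [frac, sub_nonneg]
  exact div_le_one_of_le₀ (sumSq_mono h) (sumSq_pos n).le

lemma frac_self (n : ℕ) : frac σ v E n n = 0 := by
  rw [frac, div_self (sumSq_pos n).ne', sub_self]

lemma frac_congr {m n : ℕ} (hmn : m ≤ n) (h : ∀ i < n, v i = w i) :
    frac σ v E m n = frac σ w E m n := by
  rw [frac, frac, sumSq_congr h, sumSq_congr fun i hi => h i (by omega)]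

lemma tinv_anti {m n : ℕ} (h : m ≤ n) : tinv σ v E n ≤ tinv σ v E m := by
  unfold tinv
  gcongr
  exact sumSq_mono h

lemma radius_state_ne_zero (n : ℕ) : radius (state σ v E n) ≠ 0 := by
  simpa [radius] using state_sq_pos n

lemma frac_le (n l : ℕ) : ENNReal.ofReal (frac σ v E n (n + l)) ≤
    ∑ j ∈ range l, tinv σ v E n * radius (state σ v E (n + (j + 1))) := by
  set s := sumSq σ v E n with hs
  have hs0 : 0 < s := sumSq_pos n
  have key : frac σ v E n (n + l) ≤ ∑ j ∈ range l, (√s)⁻¹ * |sol σ v E (n + 2 + j)| := by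
    set t := sumSq σ v E (n + l) with ht
    have ht0 : 0 < t := sumSq_pos _
    have hst : s ≤ t := sumSq_mono (Nat.le_add_right _ _)
    have e1 : frac σ v E n (n + l) = ∑ j ∈ range l, sol σ v E (n + 2 + j) ^ 2 / t := by
      rw [← sum_div, frac, ← hs, ← ht, eq_div_iff ht0.ne', sub_mul, div_mul_cancel₀ _ ht0.ne',
        one_mul, ht, sumSq_add]
      ring
    rw [e1]
    refine sum_le_sum fun j hj => ?_
    set u := sol σ v E (n + 2 + j)
    have hu : u ^ 2 ≤ t := by
      rw [ht, sumSq_add]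
      have := single_le_sum (f := fun j => sol σ v E (n + 2 + j) ^ 2) (fun i _ => sq_nonneg _) hj
      linarith
    have hu' : |u| ≤ √t := Real.abs_le_sqrt hu
    have hsq : 0 < √s := Real.sqrt_pos.2 hs0
    have hst' : √s ≤ √t := Real.sqrt_le_sqrt hst
    rw [inv_mul_eq_div, div_le_div_iff₀ ht0 hsq, ← sq_abs, ← Real.mul_self_sqrt ht0.le]
    have := abs_nonneg u
    nlinarith [mul_le_mul hu' hst' hsq.le (Real.sqrt_nonneg t), mul_nonneg this this]
  refine (ENNReal.ofReal_le_ofReal key).trans ?_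
  rw [ENNReal.ofReal_sum_of_nonneg fun i _ => by positivity]
  refine sum_le_sum fun j _ => ?_
  rw [ENNReal.ofReal_mul (by positivity), tinv, ← hs,
    ENNReal.ofReal_inv_of_pos (Real.sqrt_pos.2 hs0), radius, state]
  gcongr
  refine Real.abs_le_sqrt ?_
  rw [show n + (j + 1) + 1 = n + 2 + j by ring]
  exact le_add_of_nonneg_right (sq_nonneg _)

section Marginal

variable {c : ℕ → ℝ} {ε : ℝ}

/-- The product noise. -/
abbrev noise (c : ℕ → ℝ) (ε : ℝ) : (i : ℕ) → Measure ((fun _ : ℕ => ℝ) i) := fun n => unif (c n) ε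

lemma lmarginal_state (n l : ℕ) {W : (ℕ → ℝ) → ℝ≥0∞} (hW : Measurable W)
    (hdep : ∀ v w : ℕ → ℝ, (∀ i < n, v i = w i) → W v = W w) {h : ℝ × ℝ → ℝ≥0∞}
    (hh : Measurable h) :
    lmarginal (noise c ε) (Ico n (n + l)) (fun w => W w * h (state σ w E (n + l))) v =
      W v * iterAvg c E ε n l h (state σ v E n) := by
  induction l generalizing h with
  | zero => simp [iterAvg]
  | succ l ih =>
    have hmeas : Measurable fun w : ℕ → ℝ => W w * h (state σ w E (n + (l + 1))) :=
      hW.mul (hh.comp ((measurable_sol measurable_id measurable_const _).prodMk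
        (measurable_sol measurable_id measurable_const _)))
    have hI : Ico n (n + (l + 1)) = insert (n + l) (Ico n (n + l)) := by
      ext i; simp only [mem_Ico, mem_insert]; omega
    rw [hI, lmarginal_insert' _ hmeas (by simp), iterAvg, ← ih (measurable_avgStep hh)]
    congr 1
    ext w
    have h1 : ∀ a, W (Function.update w (n + l) a) = W w := fun a =>
      hdep _ _ fun i hi => Function.update_of_ne (by omega) _ _
    have h2 : ∀ a, state σ (Function.update w (n + l) a) E (n + (l + 1)) =
        ((E - a) * (state σ w E (n + l)).1 - (state σ w E (n + l)).2, (state σ w E (n + l)).1) := by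
      intro a
      have h3 : ∀ k, k ≤ n + l + 1 →
          sol σ (Function.update w (n + l) a) E k = sol σ w E k := fun k hk =>
        sol_congr fun i hi => Function.update_of_ne (by omega) _ _
      simp only [state, ← add_assoc, sol_add_two, Function.update_self]
      rw [h3 _ le_rfl, h3 _ (by omega)]
    simp only [h1, h2]
    rw [lintegral_const_mul _ (by fun_prop), avgStep]

lemma lmarginal_lintegral (s : Finset ℕ) (ν : Measure ℝ) [SFinite ν]
    {Φ : (ℕ → ℝ) → ℝ → ℝ≥0∞} (hΦ : Measurable (Function.uncurry Φ)) :
    lmarginal (noise c ε) s (fun w => ∫⁻ E, Φ w E ∂ν) v =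
      ∫⁻ E, lmarginal (noise c ε) s (fun w => Φ w E) v ∂ν := by
  unfold lmarginal
  rw [lintegral_lintegral_swap]
  apply Measurable.aemeasurable
  exact hΦ.comp ((measurable_updateFinset.comp measurable_fst).prodMk measurable_snd)

end Marginal

end Solutions

/-! ### Choice of a good extension of the potential -/

section Expectation

variable {σ : ℝ} {v : ℕ → ℝ} {E : ℝ} {c : ℕ → ℝ} {ε : ℝ} {C₀ : ℝ≥0∞} {β : ℕ → ℝ≥0∞}

/-- Bounds on averages of the inverse norm and of its square, uniform in the starting point. -/
def TransferBounds (c : ℕ → ℝ) (E ε : ℝ) (C₀ : ℝ≥0∞) (β : ℕ → ℝ≥0∞) : Prop :=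
  ∀ (n₀ l : ℕ) (x : ℝ × ℝ), 0 < x.1 ^ 2 + x.2 ^ 2 →
    iterAvg c E ε n₀ l (fun x => (radius x)⁻¹ ^ 2) x ≤ C₀ * (radius x)⁻¹ ^ 2 ∧
    iterAvg c E ε n₀ l (fun x => (radius x)⁻¹) x ≤ β l * (radius x)⁻¹

lemma measurable_inv_radius : Measurable fun x => (radius x)⁻¹ := measurable_radius.inv

lemma measurable_radius_state (n : ℕ) : Measurable fun w : ℕ → ℝ => radius (state σ w E n) :=
  measurable_radius.comp ((measurable_sol measurable_id measurable_const _).prodMk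
    (measurable_sol measurable_id measurable_const _))

lemma tinv_congr {w : ℕ → ℝ} {n : ℕ} (h : ∀ i < n, v i = w i) : tinv σ v E n = tinv σ w E n := by
  rw [tinv, tinv, sumSq_congr h]

lemma lmarginal_frozen_le (hB : TransferBounds c E ε C₀ β) (m n l : ℕ) (hmn : m ≤ n) :
    lmarginal (noise c ε) (Ico n (n + l))
        (fun w => ENNReal.ofReal (frac σ w E m n) * rinv σ w E (n + l) ^ 2) v ≤
      C₀ * (ENNReal.ofReal (frac σ v E m n) * rinv σ v E n ^ 2) := by
  have := lmarginal_state (c := c) (ε := ε) (σ := σ) (E := E) (v := v) n l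
    (W := fun w => ENNReal.ofReal (frac σ w E m n))
    (measurable_frac measurable_id measurable_const m n).ennreal_ofReal
    (fun v w h => by simp only [frac_congr hmn h]) (measurable_inv_radius.pow_const 2)
  simp only [rinv]
  rw [this]
  calc _ ≤ ENNReal.ofReal (frac σ v E m n) * (C₀ * (radius (state σ v E n))⁻¹ ^ 2) := by
        gcongr
        exact (hB n l _ (state_sq_pos n)).1
    _ = _ := by ring

lemma lmarginal_tinv_le (hB : TransferBounds c E ε C₀ β) (n l : ℕ) :
    lmarginal (noise c ε) (Ico n (n + l))
        (fun w => tinv σ w E (n + l) * rinv σ w E (n + l)) v ≤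
      β l * (tinv σ v E n * rinv σ v E n) := by
  have := lmarginal_state (c := c) (ε := ε) (σ := σ) (E := E) (v := v) n l
    (W := fun w => tinv σ w E n) (measurable_tinv measurable_id measurable_const n)
    (fun v w h => tinv_congr h) measurable_inv_radius
  simp only [rinv]
  refine (lmarginal_mono (g := fun w => tinv σ w E n * (radius (state σ w E (n + l)))⁻¹)
    (fun w => by beta_reduce; gcongr; exact tinv_anti (Nat.le_add_right n l)) v).trans ?_
  rw [this]
  calc _ ≤ tinv σ v E n * (β l * (radius (state σ v E n))⁻¹) := by
        gcongr
        exact (hB n l _ (state_sq_pos n)).2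
    _ = _ := by ring

lemma lmarginal_radius_le (hB : TransferBounds c E ε C₀ β) (n m k : ℕ) :
    lmarginal (noise c ε) (Ico n (n + m + k))
        (fun w => tinv σ w E n * radius (state σ w E (n + m)) *
          (radius (state σ w E (n + m + k)))⁻¹ ^ 2) v ≤
      C₀ * β m * (tinv σ v E n * rinv σ v E n) := by
  have hU : Ico n (n + m + k) = Ico n (n + m) ∪ Ico (n + m) (n + m + k) := by
    rw [Ico_union_Ico_eq_Ico] <;> omega
  have ht : Measurable fun w => tinv σ w E n := measurable_tinv measurable_id measurable_const n
  rw [hU, lmarginal_union _ _ (by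
    exact (ht.mul (measurable_radius_state _)).mul ((measurable_radius_state _).inv.pow_const 2))
    (Ico_disjoint_Ico_consecutive _ _ _)]
  refine (lmarginal_mono (g := fun w => (tinv σ w E n * C₀) * (radius (state σ w E (n + m)))⁻¹)
    (fun w => ?_) v).trans ?_
  · rw [lmarginal_state (c := c) (ε := ε) (σ := σ) (E := E) (v := w) (n + m) k
      (W := fun w => tinv σ w E n * radius (state σ w E (n + m)))
      (ht.mul (measurable_radius_state _))
      (fun v w h => by rw [tinv_congr fun i hi => h i (by omega), state_congr h])
      (measurable_inv_radius.pow_const 2)]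
    set r := radius (state σ w E (n + m)) with hr
    have hr0 : r ≠ 0 := radius_state_ne_zero _
    have hrt : r ≠ ∞ := by rw [hr, radius]; simp
    calc _ ≤ tinv σ w E n * r * (C₀ * r⁻¹ ^ 2) := by
          gcongr
          exact (hB (n + m) k _ (state_sq_pos _)).1
      _ = tinv σ w E n * C₀ * r⁻¹ * (r * r⁻¹) := by ring
      _ = _ := by rw [ENNReal.mul_inv_cancel hr0 hrt, mul_one]
  · rw [lmarginal_state (c := c) (ε := ε) (σ := σ) (E := E) (v := v) n m
      (W := fun w => tinv σ w E n * C₀) (ht.mul_const _)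
      (fun v w h => by rw [tinv_congr h]) measurable_inv_radius]
    calc _ ≤ tinv σ v E n * C₀ * (β m * (radius (state σ v E n))⁻¹) := by
          gcongr
          exact (hB n m _ (state_sq_pos _)).2
      _ = _ := by rw [rinv]; ring

lemma lmarginal_frac_le (hB : TransferBounds c E ε C₀ β) (n l : ℕ) :
    lmarginal (noise c ε) (Ico n (n + l))
        (fun w => ENNReal.ofReal (frac σ w E n (n + l)) * rinv σ w E (n + l) ^ 2) v ≤
      C₀ * (∑' j, β j) * (tinv σ v E n * rinv σ v E n) := by
  have ht : Measurable fun w => tinv σ w E n := measurable_tinv measurable_id measurable_const n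
  calc _ ≤ lmarginal (noise c ε) (Ico n (n + l)) (fun w => ∑ j ∈ range l,
        tinv σ w E n * radius (state σ w E (n + (j + 1))) *
          (radius (state σ w E (n + l)))⁻¹ ^ 2) v := by
        refine lmarginal_mono (fun w => ?_) v
        rw [← sum_mul]
        beta_reduce
        rw [rinv]
        gcongr
        exact frac_le n l
    _ = ∑ j ∈ range l, lmarginal (noise c ε) (Ico n (n + l)) (fun w =>
        tinv σ w E n * radius (state σ w E (n + (j + 1))) *
          (radius (state σ w E (n + l)))⁻¹ ^ 2) v := by
        unfold lmarginal
        rw [lintegral_finsetSum]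
        intro j _
        have : Measurable fun w => tinv σ w E n * radius (state σ w E (n + (j + 1))) *
          (radius (state σ w E (n + l)))⁻¹ ^ 2 :=
          (ht.mul (measurable_radius_state _)).mul ((measurable_radius_state _).inv.pow_const 2)
        exact this.comp measurable_updateFinset
    _ ≤ ∑ j ∈ range l, C₀ * β (j + 1) * (tinv σ v E n * rinv σ v E n) := by
        refine sum_le_sum fun j hj => ?_
        obtain ⟨k, rfl⟩ : ∃ k, l = j + 1 + k :=
          Nat.exists_eq_add_of_le (mem_range.1 hj)
        rw [← add_assoc n (j + 1) k]
        exact lmarginal_radius_le hB n (j + 1) k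
    _ ≤ _ := by
        rw [← sum_mul, ← mul_sum]
        gcongr
        calc ∑ j ∈ range l, β (j + 1) ≤ ∑' j, β (j + 1) := ENNReal.sum_le_tsum _
          _ ≤ _ := ENNReal.tsum_comp_le_tsum_of_injective (add_left_injective 1) β

end Expectation

/-- The energy window, with Lebesgue measure. -/
def window : Measure ℝ := volume.restrict (Set.Icc (-3) 3)

instance : IsFiniteMeasure window := by unfold window; infer_instance

/-- The integral of `frac σ v E m n * rinv σ v E k ^ 2` over the energy window. -/
def fracInt (σ : ℝ) (v : ℕ → ℝ) (m n k : ℕ) : ℝ≥0∞ :=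
  ∫⁻ E, ENNReal.ofReal (frac σ v E m n) * rinv σ v E k ^ 2 ∂window

/-- The integral of `tinv σ v E n * rinv σ v E n` over the energy window. -/
def tailInt (σ : ℝ) (v : ℕ → ℝ) (n : ℕ) : ℝ≥0∞ := ∫⁻ E, tinv σ v E n * rinv σ v E n ∂window

lemma measurable_uncurry_frac (σ : ℝ) (m n k : ℕ) : Measurable (Function.uncurry
    fun (w : ℕ → ℝ) E => ENNReal.ofReal (frac σ w E m n) * rinv σ w E k ^ 2) :=
  (measurable_frac measurable_fst measurable_snd m n).ennreal_ofReal.mul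
    ((measurable_rinv measurable_fst measurable_snd k).pow_const 2)

lemma measurable_uncurry_tail (σ : ℝ) (n : ℕ) : Measurable (Function.uncurry
    fun (w : ℕ → ℝ) E => tinv σ w E n * rinv σ w E n) :=
  (measurable_tinv measurable_fst measurable_snd n).mul
    (measurable_rinv measurable_fst measurable_snd n)

lemma measurable_fracInt (σ : ℝ) (m n k : ℕ) : Measurable fun w => fracInt σ w m n k :=
  (measurable_uncurry_frac σ m n k).lintegral_prod_right'

lemma measurable_tailInt (σ : ℝ) (n : ℕ) : Measurable fun w => tailInt σ w n :=
  (measurable_uncurry_tail σ n).lintegral_prod_right'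

lemma lmarginal_integral_le {c : ℕ → ℝ} {ε : ℝ} {v : ℕ → ℝ} {Φ : (ℕ → ℝ) → ℝ → ℝ≥0∞} {Ψ : ℝ → ℝ≥0∞}
    {K : ℝ≥0∞} (hK : K ≠ ∞) (s : Finset ℕ) (hΦ : Measurable (Function.uncurry Φ))
    (h : ∀ E ∈ Set.Icc (-3 : ℝ) 3, lmarginal (noise c ε) s (fun w => Φ w E) v ≤ K * Ψ E) :
    lmarginal (noise c ε) s (fun w => ∫⁻ E, Φ w E ∂window) v ≤ K * ∫⁻ E, Ψ E ∂window := by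
  rw [lmarginal_lintegral s window hΦ, ← lintegral_const_mul' _ _ hK]
  exact setLIntegral_mono_ae' measurableSet_Icc (ae_of_all _ h)

/-- A configuration at which a functional with average less than one is at most one. -/
lemma exists_of_lmarginal_lt {c : ℕ → ℝ} {ε : ℝ} (hε : 0 < ε) (s : Finset ℕ) {v : ℕ → ℝ}
    {Φ : (ℕ → ℝ) → ℝ≥0∞} (h : lmarginal (noise c ε) s Φ v < 1) :
    ∃ w : ℕ → ℝ, (∀ i ∉ s, w i = v i) ∧ (∀ i ∈ s, |w i - c i| ≤ ε) ∧ Φ w < 1 := by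
  have hp : ∀ i, IsProbabilityMeasure (noise c ε i) := fun i => isProbabilityMeasure_unif (c i) hε
  set P := Measure.pi fun i : s => noise c ε i
  have hae : ∀ᵐ y ∂P, ∀ i : s, y i ∈ Set.Icc (c i - ε) (c i + ε) := by
    rw [ae_all_iff]
    intro i
    exact (Measure.quasiMeasurePreserving_eval (fun i : s => noise c ε i) i).ae
      (ae_unif_mem (c i) ε)
  have : ∃ y, (∀ i : s, y i ∈ Set.Icc (c i - ε) (c i + ε)) ∧
      Φ (Function.updateFinset v s y) < 1 := by
    by_contra hcon
    push Not at hcon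
    refine absurd h (not_lt.2 ?_)
    calc (1 : ℝ≥0∞) = ∫⁻ _, 1 ∂P := by simp
      _ ≤ _ := lintegral_mono_ae (by filter_upwards [hae] with y hy using hcon y hy)
  obtain ⟨y, hy, hΦ⟩ := this
  refine ⟨_, fun i hi => by simp [Function.updateFinset, hi], fun i hi => ?_, hΦ⟩
  have := hy ⟨i, hi⟩
  simp only [Function.updateFinset, hi, dif_pos]
  rw [abs_le]
  constructor <;> linarith [this.1, this.2]

/-- Existence of a good continuation of a frozen potential. -/
lemma exists_extension {ε : ℝ} (hε : 0 < ε) (hε2 : ε ≤ 1 / 2) {C₀ : ℝ≥0∞} {β : ℕ → ℝ≥0∞}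
    (hC : C₀ ≠ ∞) (hβ : ∑' l, β l ≠ ∞)
    (hB : ∀ (c : ℕ → ℝ) (E : ℝ), (∀ n, |E - c n| + ε ≤ 4) → TransferBounds c E ε C₀ β)
    {v : ℕ → ℝ} (hv : ∀ n, |v n| ≤ 1 / 2) {m n : ℕ} (hmn : m ≤ n) (S : Finset ℝ)
    {τ₁ τ₂ τ₃ : ℝ≥0∞} (h1 : 4 * (C₀ * ∑ σ ∈ S, fracInt σ v m n n) ≤ τ₁)
    (h2 : 4 * (C₀ * (∑' l, β l) * ∑ σ ∈ S, tailInt σ v n) ≤ τ₂)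
    (hfin : ∑ σ ∈ S, tailInt σ v n ≠ ∞)
    (h01 : τ₁ ≠ 0) (h02 : τ₂ ≠ 0) (h03 : τ₃ ≠ 0) (L : ℕ) :
    ∃ l ≥ L, ∃ w : ℕ → ℝ, (∀ i ∉ Ico n (n + l), w i = v i) ∧
      (∀ i ∈ Ico n (n + l), |w i - v i| ≤ ε) ∧
      ∑ σ ∈ S, fracInt σ w m n (n + l) ≤ τ₁ ∧
      ∑ σ ∈ S, fracInt σ w n (n + l) (n + l) ≤ τ₂ ∧
      ∑ σ ∈ S, tailInt σ w (n + l) ≤ τ₃ := by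
  have hlim : Filter.Tendsto (fun l => 4 * (β l * ∑ σ ∈ S, tailInt σ v n))
      Filter.atTop (nhds 0) := by
    have h0 := ENNReal.tendsto_atTop_zero_of_tsum_ne_top hβ
    have := ENNReal.Tendsto.const_mul (a := 4)
      (ENNReal.Tendsto.mul_const (b := ∑ σ ∈ S, tailInt σ v n) h0 (Or.inr hfin)) (Or.inr (by simp))
    simpa using this
  obtain ⟨l, hlL, h3⟩ : ∃ l ≥ L, 4 * (β l * ∑ σ ∈ S, tailInt σ v n) ≤ τ₃ := by
    have := (hlim.eventually_le_const (pos_iff_ne_zero.2 h03)).and (Filter.eventually_ge_atTop L)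
    obtain ⟨l, hl1, hl2⟩ := this.exists
    exact ⟨l, hl2, hl1⟩
  have hBE : ∀ E ∈ Set.Icc (-3 : ℝ) 3, TransferBounds v E ε C₀ β := fun E hE => hB v E fun n => by
    have h1 : |E - v n| ≤ |E| + |v n| := abs_sub _ _
    have h2 : |E| ≤ 3 := abs_le.2 hE
    linarith [hv n]
  have hβl : β l ≠ ∞ := ENNReal.ne_top_of_tsum_ne_top hβ l
  set s := Ico n (n + l)
  set X₁ : (ℕ → ℝ) → ℝ≥0∞ := fun w => ∑ σ ∈ S, fracInt σ w m n (n + l)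
  set X₂ : (ℕ → ℝ) → ℝ≥0∞ := fun w => ∑ σ ∈ S, fracInt σ w n (n + l) (n + l)
  set X₃ : (ℕ → ℝ) → ℝ≥0∞ := fun w => ∑ σ ∈ S, tailInt σ w (n + l)
  have mX₁ : Measurable X₁ := Finset.measurable_fun_sum _ fun σ _ => measurable_fracInt σ _ _ _
  have mX₂ : Measurable X₂ := Finset.measurable_fun_sum _ fun σ _ => measurable_fracInt σ _ _ _
  have mX₃ : Measurable X₃ := Finset.measurable_fun_sum _ fun σ _ => measurable_tailInt σ _
  have lsum : ∀ (Φ : ℝ → (ℕ → ℝ) → ℝ≥0∞), (∀ σ, Measurable (Φ σ)) →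
      lmarginal (noise v ε) s (fun w => ∑ σ ∈ S, Φ σ w) v =
        ∑ σ ∈ S, lmarginal (noise v ε) s (Φ σ) v := by
    intro Φ hΦ
    unfold lmarginal
    exact lintegral_finsetSum _ fun σ _ => (hΦ σ).comp measurable_updateFinset
  have e1 : 4 * lmarginal (noise v ε) s X₁ v ≤ τ₁ := by
    refine le_trans ?_ h1
    rw [lsum _ fun σ => measurable_fracInt σ _ _ _, mul_sum (a := C₀)]
    gcongr with σ
    exact lmarginal_integral_le hC s (measurable_uncurry_frac σ _ _ _)
      fun E hE => lmarginal_frozen_le (hBE E hE) m n l hmn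
  have e2 : 4 * lmarginal (noise v ε) s X₂ v ≤ τ₂ := by
    refine le_trans ?_ h2
    rw [lsum _ fun σ => measurable_fracInt σ _ _ _, mul_sum (a := C₀ * ∑' l, β l)]
    gcongr with σ
    exact lmarginal_integral_le (ENNReal.mul_ne_top hC hβ) s (measurable_uncurry_frac σ _ _ _)
      fun E hE => lmarginal_frac_le (hBE E hE) n l
  have e3 : 4 * lmarginal (noise v ε) s X₃ v ≤ τ₃ := by
    refine le_trans ?_ h3
    rw [lsum _ fun σ => measurable_tailInt σ _, mul_sum (a := β l)]
    gcongr with σ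
    exact lmarginal_integral_le hβl s (measurable_uncurry_tail σ _)
      fun E hE => lmarginal_tinv_le (hBE E hE) n l
  have quarter : ∀ {X : (ℕ → ℝ) → ℝ≥0∞} {τ : ℝ≥0∞}, Measurable X → τ ≠ 0 →
      4 * lmarginal (noise v ε) s X v ≤ τ →
      lmarginal (noise v ε) s (fun w => τ⁻¹ * X w) v ≤ 4⁻¹ := by
    intro X τ hX h0 hle
    have hml : lmarginal (noise v ε) s (fun w => τ⁻¹ * X w) v =
        τ⁻¹ * lmarginal (noise v ε) s X v := by
      unfold lmarginal
      exact lintegral_const_mul _ (hX.comp measurable_updateFinset)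
    rw [hml]
    by_cases ht : τ = ∞
    · simp [ht]
    rw [← one_div (4 : ℝ≥0∞), ENNReal.le_div_iff_mul_le (by simp) (by simp), mul_assoc,
      mul_comm _ (4 : ℝ≥0∞)]
    calc τ⁻¹ * (4 * lmarginal (noise v ε) s X v) ≤ τ⁻¹ * τ := by gcongr
      _ = 1 := ENNReal.inv_mul_cancel h0 ht
  have tot : lmarginal (noise v ε) s
      (fun w => τ₁⁻¹ * X₁ w + (τ₂⁻¹ * X₂ w + τ₃⁻¹ * X₃ w)) v < 1 := by
    have hadd : ∀ {f g : (ℕ → ℝ) → ℝ≥0∞}, Measurable f →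
        lmarginal (noise v ε) s (fun w => f w + g w) v =
          lmarginal (noise v ε) s f v + lmarginal (noise v ε) s g v := by
      intro f g hf
      unfold lmarginal
      exact lintegral_add_left (hf.comp measurable_updateFinset) _
    rw [hadd (mX₁.const_mul _), hadd (mX₂.const_mul _)]
    calc _ ≤ (4 : ℝ≥0∞)⁻¹ + (4⁻¹ + 4⁻¹) :=
          add_le_add (quarter mX₁ h01 e1) (add_le_add (quarter mX₂ h02 e2) (quarter mX₃ h03 e3))
      _ < 1 := by
          have h4 : (4 : ℝ≥0∞)⁻¹ = ((1 / 4 : ℝ≥0) : ℝ≥0∞) := by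
            rw [one_div, ENNReal.coe_inv (by norm_num)]; norm_num
          rw [h4, ← ENNReal.coe_add, ← ENNReal.coe_add, ← ENNReal.coe_one, ENNReal.coe_lt_coe,
            ← NNReal.coe_lt_coe]
          push_cast
          norm_num
  obtain ⟨w, hw1, hw2, hw3⟩ := exists_of_lmarginal_lt hε s tot
  have fin : ∀ {x τ : ℝ≥0∞}, τ ≠ 0 → τ⁻¹ * x ≤ 1 → x ≤ τ := by
    intro x τ h0 hx
    by_cases ht : τ = ∞
    · simp [ht]
    · calc x = τ * (τ⁻¹ * x) := by rw [← mul_assoc, ENNReal.mul_inv_cancel h0 ht, one_mul]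
        _ ≤ τ * 1 := by gcongr
        _ = τ := mul_one _
  refine ⟨l, hlL, w, hw1, hw2, fin h01 ?_, fin h02 ?_, fin h03 ?_⟩
  · exact le_self_add.trans hw3.le
  · exact (le_self_add.trans le_add_self).trans hw3.le
  · exact (le_add_self.trans le_add_self).trans hw3.le

/-! ### Box operators and their quadrature formula -/

/-- The restriction of the operator to the sites `0, …, N - 1`, with the boundary condition
`ψ(-1) = σ ψ(0)` on the left and a Dirichlet condition on the right. -/
def boxMatrix (σ : ℝ) (v : ℕ → ℝ) (N : ℕ) : Matrix (Fin N) (Fin N) ℝ := fun n k =>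
  ((if (k : ℕ) = n + 1 then 1 else 0) + if (k : ℕ) + 1 = n then 1 else 0) +
    if (k : ℕ) = n then v n + (if (n : ℕ) = 0 then σ else 0) else 0

lemma boxMatrix_isHermitian (σ : ℝ) (v : ℕ → ℝ) (N : ℕ) : (boxMatrix σ v N).IsHermitian := by
  ext n k
  simp only [Matrix.conjTranspose_apply, boxMatrix, star_trivial]
  rcases lt_trichotomy (n : ℕ) k with h | h | h
  · simp [h.ne, h.ne', show ¬ ((n : ℕ) = k + 1) by omega, show ¬ ((k : ℕ) + 1 = n) by omega,
      eq_comm]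
  · simp [h]
  · simp [h.ne, h.ne', show ¬ ((k : ℕ) = n + 1) by omega, show ¬ ((n : ℕ) + 1 = k) by omega,
      eq_comm]

/-- Extension by zero of a vector on a box. -/
def extendZero {N : ℕ} (u : Fin N → ℝ) (n : ℕ) : ℝ := if h : n < N then u ⟨n, h⟩ else 0

lemma sum_ite_eq_extendZero {N : ℕ} (u : Fin N → ℝ) (m : ℕ) :
    ∑ k : Fin N, (if (k : ℕ) = m then u k else 0) = extendZero u m := by
  unfold extendZero
  split_ifs with h
  · rw [sum_eq_single ⟨m, h⟩]
    · simp
    · intro b _ hb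
      rw [if_neg fun h' => hb (Fin.ext h')]
    · simp
  · exact sum_eq_zero fun k _ => if_neg (by have := k.2; omega)

lemma extendZero_coe {N : ℕ} (u : Fin N → ℝ) (n : Fin N) : extendZero u n = u n := by
  simp [extendZero]

lemma boxMatrix_mulVec {N : ℕ} (σ : ℝ) (v : ℕ → ℝ) (u : Fin N → ℝ) (n : Fin N) :
    (boxMatrix σ v N).mulVec u n = extendZero u (n + 1) +
      (if (n : ℕ) = 0 then σ * u n else extendZero u (n - 1)) + v n * u n := by
  have h2 : ∑ k : Fin N, (if (k : ℕ) + 1 = n then u k else 0) =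
      if (n : ℕ) = 0 then 0 else extendZero u (n - 1) := by
    split_ifs with h
    · exact sum_eq_zero fun k _ => if_neg (by omega)
    · rw [← sum_ite_eq_extendZero]
      exact sum_congr rfl fun k _ => by simp only [show (k : ℕ) + 1 = n ↔ (k : ℕ) = n - 1 by omega]
  have h3 := sum_ite_eq_extendZero (fun k => (v n + if (n : ℕ) = 0 then σ else 0) * u k) n
  rw [extendZero_coe] at h3
  simp only [Matrix.mulVec, dotProduct, boxMatrix, add_mul, ite_mul, one_mul, zero_mul,
    sum_add_distrib, sum_ite_eq_extendZero, h2] at h3 ⊢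
  rw [h3]
  split_ifs <;> ring

lemma extendZero_eq_mul_sol {N : ℕ} {σ : ℝ} {v : ℕ → ℝ} {u : Fin N → ℝ} {e : ℝ}
    (h : (boxMatrix σ v N).mulVec u = e • u) {n : ℕ} (hn : n ≤ N) :
    extendZero u n = extendZero u 0 * sol σ v e (n + 1) := by
  have row : ∀ n (hn : n < N), extendZero u (n + 1) + (if n = 0 then σ * extendZero u n
      else extendZero u (n - 1)) + v n * extendZero u n = e * extendZero u n := by
    intro n hn
    have := congrFun h ⟨n, hn⟩
    rw [boxMatrix_mulVec, ← extendZero_coe u] at this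
    simpa [← extendZero_coe u] using this
  induction n using Nat.twoStepInduction with
  | zero => simp
  | one =>
    have := row 0 hn
    simp only [if_true] at this
    rw [sol_add_two, sol_one, sol_zero]
    linarith
  | more n ih1 ih2 =>
    have := row (n + 1) hn
    rw [if_neg (by omega), Nat.add_sub_cancel, ih1 (by omega), ih2 (by omega)] at this
    rw [sol_add_two]
    linarith

lemma abs_le_three_of_mulVec_eq {N : ℕ} {σ : ℝ} {v : ℕ → ℝ} {u : Fin N → ℝ} {e : ℝ} (hσ : |σ| ≤ 1)
    (hv : ∀ n < N, |v n| ≤ 1) (h : (boxMatrix σ v N).mulVec u = e • u) (hu : u ≠ 0) : |e| ≤ 3 := by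
  obtain ⟨i, hi⟩ := Function.ne_iff.1 hu
  have : Nonempty (Fin N) := ⟨i⟩
  obtain ⟨n, hn⟩ := Finite.exists_max fun n => |u n|
  have hpos : 0 < |u n| := (abs_pos.2 hi).trans_le (hn i)
  have hz : ∀ m, |extendZero u m| ≤ |u n| := by
    intro m
    unfold extendZero
    split_ifs
    · exact hn _
    · simp
  have hmid : |if (n : ℕ) = 0 then σ * u n else extendZero u (n - 1)| ≤ |u n| := by
    split_ifs
    · rw [abs_mul]
      exact mul_le_of_le_one_left hpos.le hσ
    · exact hz _
  have hvn : |v n * u n| ≤ |u n| := by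
    rw [abs_mul]
    exact mul_le_of_le_one_left hpos.le (hv n n.2)
  have row := congrFun h n
  rw [boxMatrix_mulVec, Pi.smul_apply, smul_eq_mul] at row
  have key : |e| * |u n| ≤ 3 * |u n| := by
    rw [← abs_mul, ← row]
    refine (abs_add_three _ _ _).trans ?_
    linarith [hz (n + 1)]
  exact le_of_mul_le_mul_right key hpos

/-- Sum of squares of the solution over the sites `0, …, N - 1`. -/
def boxMass (σ : ℝ) (v : ℕ → ℝ) (E : ℝ) (N : ℕ) : ℝ := ∑ j ∈ range N, sol σ v E (j + 1) ^ 2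

lemma boxMass_pos {σ : ℝ} {v : ℕ → ℝ} {E : ℝ} {N : ℕ} (hN : 0 < N) : 0 < boxMass σ v E N := by
  have h : sol σ v E (0 + 1) ^ 2 ≤ boxMass σ v E N :=
    single_le_sum (f := fun j => sol σ v E (j + 1) ^ 2) (fun i _ => sq_nonneg _) (by simpa)
  rw [zero_add, sol_one] at h
  linarith

theorem exists_box_quadrature (σ : ℝ) (v : ℕ → ℝ) {N : ℕ} (hσ : |σ| ≤ 1) (hv : ∀ n < N, |v n| ≤ 1)
    (hN : 0 < N) :
    ∃ e : Fin N → ℝ, Function.Injective e ∧ (∀ i, sol σ v (e i) (N + 1) = 0) ∧ (∀ i, |e i| ≤ 3) ∧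
      ∀ n < N, ∀ k < N, ∑ i, sol σ v (e i) (n + 1) * sol σ v (e i) (k + 1) / boxMass σ v (e i) N =
        if n = k then 1 else 0 := by
  have hA := boxMatrix_isHermitian σ v N
  set b := hA.eigenvectorBasis
  have heig : ∀ i, (boxMatrix σ v N).mulVec (b i) = hA.eigenvalues i • ⇑(b i) :=
    hA.mulVec_eigenvectorBasis
  set c : Fin N → ℝ := fun i => extendZero (b i) 0
  have hval : ∀ i (n : Fin N), b i n = c i * sol σ v (hA.eigenvalues i) (n + 1) := fun i n => by
    rw [← extendZero_coe (b i) n, extendZero_eq_mul_sol (heig i) n.2.le]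
  have hinner : ∀ i j, ∑ n : Fin N, b i n * b j n = if i = j then 1 else 0 := fun i j => by
    rw [← orthonormal_iff_ite.1 b.orthonormal i j]
    simp [PiLp.inner_apply, mul_comm]
  have hnorm : ∀ i, c i ^ 2 * boxMass σ v (hA.eigenvalues i) N = 1 := fun i => by
    have := hinner i i
    rw [if_pos rfl] at this
    rw [← this, boxMass, mul_sum, ← Fin.sum_univ_eq_sum_range
      (fun j => c i ^ 2 * sol σ v (hA.eigenvalues i) (j + 1) ^ 2)]
    exact sum_congr rfl fun n _ => by rw [hval]; ring
  have hc : ∀ i, c i ≠ 0 := fun i h0 => by simpa [h0] using hnorm i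
  refine ⟨hA.eigenvalues, fun i j hij => ?_, fun i => ?_, fun i => ?_, fun n hn k hk => ?_⟩
  · by_contra hne
    have := hinner i j
    rw [if_neg hne] at this
    have h2 : c i * c j * boxMass σ v (hA.eigenvalues i) N = 0 := by
      rw [← this, boxMass, mul_sum, ← Fin.sum_univ_eq_sum_range
        (fun m => c i * c j * sol σ v (hA.eigenvalues i) (m + 1) ^ 2)]
      exact sum_congr rfl fun n _ => by rw [hval, hval, ← hij]; ring
    exact mul_ne_zero (mul_ne_zero (hc i) (hc j)) (boxMass_pos hN).ne' h2
  · have := extendZero_eq_mul_sol (heig i) le_rfl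
    rw [extendZero, dif_neg (lt_irrefl _)] at this
    exact (mul_eq_zero.1 this.symm).resolve_left (hc i)
  · refine abs_le_three_of_mulVec_eq hσ hv (heig i) fun h0 => ?_
    apply hc i
    simp [c, h0, extendZero]
  · have h1 := b.sum_inner_mul_inner (EuclideanSpace.single ⟨n, hn⟩ (1 : ℝ))
      (EuclideanSpace.single ⟨k, hk⟩ 1)
    have h2 : ∀ i, sol σ v (hA.eigenvalues i) (n + 1) * sol σ v (hA.eigenvalues i) (k + 1) /
        boxMass σ v (hA.eigenvalues i) N = b i ⟨n, hn⟩ * b i ⟨k, hk⟩ := fun i => by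
      rw [hval, hval, div_eq_iff (boxMass_pos hN).ne']
      linear_combination (-(sol σ v (hA.eigenvalues i) (n + 1) *
        sol σ v (hA.eigenvalues i) (k + 1))) * hnorm i
    simp_rw [h2]
    simpa [EuclideanSpace.inner_single_left, EuclideanSpace.inner_single_right,
      Pi.single_apply, eq_comm] using h1

/-! ### Change of variables along the branches of the Weyl function -/

section ChangeOfVariables

/-- The push-forward of `G` restricted to `s` under a map `f` that is injective on `s`. -/
def pushSup (f : ℝ → ℝ) (s : Set ℝ) (G : ℝ → ℝ≥0∞) (t : ℝ) : ℝ≥0∞ := ⨆ x ∈ s ∩ f ⁻¹' {t}, G x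

variable {f f' : ℝ → ℝ} {s : Set ℝ} {G : ℝ → ℝ≥0∞}

lemma measurable_pushSup (hs : MeasurableSet s) (hf : ContinuousOn f s) (hinj : Set.InjOn f s)
    (hG : Measurable G) : Measurable (pushSup f s G) := by
  refine measurable_of_Ioi fun a => ?_
  have : pushSup f s G ⁻¹' Set.Ioi a = f '' (s ∩ G ⁻¹' Set.Ioi a) := by
    ext t
    simp only [pushSup, Set.mem_preimage, Set.mem_Ioi, lt_iSup_iff, Set.mem_image,
      Set.mem_inter_iff,
      Set.mem_singleton_iff, exists_prop]
    tauto
  rw [this]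
  exact (hs.inter (hG measurableSet_Ioi)).image_of_continuousOn_injOn
    (hf.mono Set.inter_subset_left) (hinj.mono Set.inter_subset_left)

lemma pushSup_apply (hinj : Set.InjOn f s) {x : ℝ} (hx : x ∈ s) : pushSup f s G (f x) = G x := by
  apply le_antisymm
  · exact iSup₂_le fun y hy => (hinj hy.1 hx hy.2 ▸ le_rfl)
  · exact le_iSup₂_of_le x ⟨hx, rfl⟩ le_rfl

lemma pushSup_eq_zero {t : ℝ} (ht : t ∉ f '' s) : pushSup f s G t = 0 := by
  refine le_antisymm (iSup₂_le fun y hy => absurd ⟨y, hy.1, hy.2⟩ ht) (zero_le)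

lemma lintegral_pushSup_le (hs : MeasurableSet s) (hf : ∀ x ∈ s, HasDerivAt f (f' x) x)
    (hinj : Set.InjOn f s) : ∫⁻ t, pushSup f s G t ≤ ∫⁻ x in s, ENNReal.ofReal |f' x| * G x := by
  have hm : MeasurableSet (f '' s) := hs.image_of_continuousOn_injOn
    (fun x hx => (hf x hx).continuousAt.continuousWithinAt) hinj
  have h1 : pushSup f s G = (f '' s).indicator (pushSup f s G) := by
    ext t
    by_cases ht : t ∈ f '' s
    · simp [ht]
    · simp [Set.indicator_of_notMem ht, pushSup_eq_zero ht]
  rw [h1, lintegral_indicator hm, lintegral_image_eq_lintegral_abs_deriv_mul hs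
    (fun x hx => (hf x hx).hasDerivWithinAt) hinj]
  exact (setLIntegral_congr_fun hs fun x hx => by simp only [pushSup_apply hinj hx]).le

end ChangeOfVariables

section Weyl

variable {σ : ℝ} {v : ℕ → ℝ}

lemma hasDerivAt_sol (E : ℝ) (n : ℕ) :
    HasDerivAt (fun E => sol σ v E n) ((derivative (solPoly σ v n)).eval E) E :=
  (solPoly σ v n).hasDerivAt E

lemma wronskian_eq_boxMass (E : ℝ) (n : ℕ) :
    (derivative (solPoly σ v (n + 1))).eval E * sol σ v E n -
      (derivative (solPoly σ v n)).eval E * sol σ v E (n + 1) = boxMass σ v E n := by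
  induction n with
  | zero => simp [solPoly, boxMass]
  | succ n ih =>
    rw [boxMass, sum_range_succ, ← boxMass, ← ih, sol_add_two]
    simp only [solPoly, derivative_sub, derivative_mul, derivative_X, derivative_C, eval_sub,
      eval_add, eval_mul, eval_X, eval_C, eval_one, eval_zero]
    simp only [sol]
    ring

/-- The potential value at the site `n` for which `E` becomes an eigenvalue of the box `0, …, n`. -/
def weyl (σ : ℝ) (v : ℕ → ℝ) (n : ℕ) (E : ℝ) : ℝ := E - sol σ v E n / sol σ v E (n + 1)

lemma hasDerivAt_weyl {n : ℕ} {E : ℝ} (h : sol σ v E (n + 1) ≠ 0) :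
    HasDerivAt (weyl σ v n) (boxMass σ v E (n + 1) / sol σ v E (n + 1) ^ 2) E := by
  refine ((hasDerivAt_id E).sub
    ((hasDerivAt_sol E n).div (hasDerivAt_sol E (n + 1)) h)).congr_deriv ?_
  rw [boxMass, sum_range_succ, ← boxMass, ← wronskian_eq_boxMass]
  field_simp
  ring

/-- The part of the real line on which exactly the poles in `A` of the Weyl function lie on
the left. -/
def weylBranch (σ : ℝ) (v : ℕ → ℝ) (n : ℕ) (A : Finset ℝ) : Set ℝ :=
  {E | sol σ v E (n + 1) ≠ 0 ∧ (solPoly σ v (n + 1)).roots.toFinset.filter (· < E) = A}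

lemma solPoly_monic_and_natDegree (n : ℕ) :
    ((solPoly σ v (n + 1)).Monic ∧ (solPoly σ v (n + 1)).natDegree = n) ∧
      (solPoly σ v n).natDegree ≤ n := by
  induction n with
  | zero => simp [solPoly]
  | succ n ih =>
    obtain ⟨⟨hm, hd⟩, hd'⟩ := ih
    have hm' : ((X - C (v n)) * solPoly σ v (n + 1)).Monic := (monic_X_sub_C _).mul hm
    have hn' : ((X - C (v n)) * solPoly σ v (n + 1)).natDegree = n + 1 := by
      rw [(monic_X_sub_C _).natDegree_mul hm, natDegree_X_sub_C, hd, add_comm]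
    have hlt : (solPoly σ v n).natDegree < ((X - C (v n)) * solPoly σ v (n + 1)).natDegree := by
      omega
    refine ⟨⟨hm'.sub_of_left (degree_lt_degree hlt), ?_⟩, by omega⟩
    rw [solPoly, natDegree_sub_eq_left_of_natDegree_lt hlt, hn']

lemma solPoly_succ_monic (n : ℕ) : (solPoly σ v (n + 1)).Monic :=
  (solPoly_monic_and_natDegree n).1.1

lemma natDegree_solPoly_succ (n : ℕ) : (solPoly σ v (n + 1)).natDegree = n :=
  (solPoly_monic_and_natDegree n).1.2

lemma measurable_sol_right (n : ℕ) : Measurable fun E => sol σ v E n :=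
  measurable_sol measurable_const measurable_id n

lemma measurable_boxMass (n : ℕ) : Measurable fun E => boxMass σ v E n := by
  unfold boxMass
  exact Finset.measurable_fun_sum _ fun i _ => (measurable_sol_right _).pow_const 2

lemma measurableSet_weylBranch (n : ℕ) (A : Finset ℝ) : MeasurableSet (weylBranch σ v n A) := by
  refine .inter (measurable_sol_right _ (measurableSet_singleton 0).compl) ?_
  refine Set.OrdConnected.measurableSet ⟨fun x hx y hy z hz => ?_⟩
  apply subset_antisymm
  · rw [← hy]
    exact monotone_filter_right _ fun r _ hr => hr.trans_le hz.2
  · rw [← hx]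
    exact monotone_filter_right _ fun r _ hr => hr.trans_le hz.1

lemma strictMonoOn_weyl {n : ℕ} {a b : ℝ} (h : ∀ x ∈ Set.Icc a b, sol σ v x (n + 1) ≠ 0) :
    StrictMonoOn (weyl σ v n) (Set.Icc a b) := by
  refine strictMonoOn_of_deriv_pos (convex_Icc a b)
    (fun x hx => (hasDerivAt_weyl (h x hx)).continuousAt.continuousWithinAt) fun x hx => ?_
  have hx' := h x (interior_subset hx)
  rw [(hasDerivAt_weyl hx').deriv]
  exact div_pos (boxMass_pos n.succ_pos) (by positivity)

lemma injOn_weyl (n : ℕ) (A : Finset ℝ) : Set.InjOn (weyl σ v n) (weylBranch σ v n A) := by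
  have key : ∀ x ∈ weylBranch σ v n A, ∀ y ∈ weylBranch σ v n A, x < y →
      weyl σ v n x ≠ weyl σ v n y := by
    intro x hx y hy hxy
    refine (strictMonoOn_weyl (fun z hz h0 => ?_) (Set.left_mem_Icc.2 hxy.le)
      (Set.right_mem_Icc.2 hxy.le) hxy).ne
    have hzy : z < y := hz.2.lt_of_ne fun h => hy.1 (h ▸ h0)
    have : z ∈ A := by
      rw [← hy.2]
      change eval z _ = 0 at h0
      simpa [hzy, (solPoly_succ_monic n).ne_zero] using h0
    rw [← hx.2, mem_filter] at this
    exact this.2.not_ge hz.1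
  intro x hx y hy hxy
  by_contra hne
  rcases lt_or_gt_of_ne hne with h | h
  · exact key x hx y hy h hxy
  · exact key y hy x hx h hxy.symm

/-- The sites at which the averaging over the last potential value takes place. -/
def weylPiece (σ : ℝ) (v : ℕ → ℝ) (n : ℕ) (A : Finset ℝ) : Set ℝ :=
  weylBranch σ v n A ∩ (Set.Icc (-3) 3 ∩ weyl σ v n ⁻¹' Set.Icc (-1) 1)

lemma measurable_weyl (n : ℕ) : Measurable (weyl σ v n) :=
  measurable_id.sub ((measurable_sol_right n).div (measurable_sol_right _))

lemma measurableSet_weylPiece (n : ℕ) (A : Finset ℝ) : MeasurableSet (weylPiece σ v n A) :=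
  (measurableSet_weylBranch n A).inter
    (measurableSet_Icc.inter (measurable_weyl n measurableSet_Icc))

lemma ofReal_deriv_weyl_mul_le {n : ℕ} {A : Finset ℝ} {E : ℝ} (hE : E ∈ weylPiece σ v n A)
    (a : ℝ≥0∞) :
    ENNReal.ofReal |boxMass σ v E (n + 1) / sol σ v E (n + 1) ^ 2| *
      (a / ENNReal.ofReal (boxMass σ v E (n + 1))) ≤ 17 * (a * rinv σ v E n ^ 2) := by
  obtain ⟨⟨h0, -⟩, h3, h1⟩ := hE
  have hb : 0 < boxMass σ v E (n + 1) := boxMass_pos n.succ_pos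
  have hle : |sol σ v E n| ≤ 4 * |sol σ v E (n + 1)| := by
    have h4 : |sol σ v E n / sol σ v E (n + 1)| ≤ 4 := by
      rw [abs_le]
      simp only [weyl, Set.mem_preimage, Set.mem_Icc] at h1 h3
      constructor <;> linarith [h1.1, h1.2, h3.1, h3.2]
    rwa [abs_div, div_le_iff₀ (abs_pos.2 h0)] at h4
  have hsq : (state σ v E n).1 ^ 2 + (state σ v E n).2 ^ 2 ≤ 17 * sol σ v E (n + 1) ^ 2 := by
    have := pow_le_pow_left₀ (abs_nonneg _) hle 2
    rw [mul_pow, sq_abs, sq_abs] at this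
    simp only [state]
    linarith
  have key := inv_sq_le_of_sq_le (by norm_num) h0 hsq
  have e1 : ENNReal.ofReal |boxMass σ v E (n + 1) / sol σ v E (n + 1) ^ 2| =
      ENNReal.ofReal (boxMass σ v E (n + 1)) * (ENNReal.ofReal |sol σ v E (n + 1)|)⁻¹ ^ 2 := by
    rw [abs_of_nonneg (by positivity), div_eq_mul_inv, ENNReal.ofReal_mul hb.le, ← sq_abs,
      ENNReal.ofReal_inv_of_pos (by positivity), ENNReal.ofReal_pow (abs_nonneg _), ENNReal.inv_pow]
  rw [e1, mul_right_comm, ENNReal.mul_div_cancel (by simpa using hb) ENNReal.ofReal_ne_top,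
    mul_left_comm]
  gcongr
  simpa [rinv] using key

/-- There is a value of the potential at the last site for which the box spectral measure
is controlled by the averaged one. -/
theorem exists_boundary_value (σ : ℝ) (v : ℕ → ℝ) (n : ℕ) {F : ℝ → ℝ≥0∞} (hF : Measurable F) :
    ∃ t : ℝ, |t| ≤ 1 ∧ ∀ S : Finset ℝ,
      (∀ e ∈ S, |e| ≤ 3 ∧ (e - t) * sol σ v e (n + 1) - sol σ v e n = 0) →
      ∑ e ∈ S, F e / ENNReal.ofReal (boxMass σ v e (n + 1)) ≤
        17 * ∫⁻ E, F E * rinv σ v E n ^ 2 ∂window := by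
  set I := ∫⁻ E, F E * rinv σ v E n ^ 2 ∂window with hI
  set G : ℝ → ℝ≥0∞ := fun e => F e / ENNReal.ofReal (boxMass σ v e (n + 1))
  have hG : Measurable G := hF.div (measurable_boxMass _).ennreal_ofReal
  set P := (solPoly σ v (n + 1)).roots.toFinset.powerset
  set g : Finset ℝ → ℝ → ℝ≥0∞ := fun A => pushSup (weyl σ v n) (weylPiece σ v n A) G
  have hderiv : ∀ A, ∀ x ∈ weylPiece σ v n A, HasDerivAt (weyl σ v n) _ x :=
    fun A x hx => hasDerivAt_weyl hx.1.1
  have hinj : ∀ A, Set.InjOn (weyl σ v n) (weylPiece σ v n A) := fun A =>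
    (injOn_weyl n A).mono Set.inter_subset_left
  have hg : ∀ A, Measurable (g A) := fun A => measurable_pushSup (measurableSet_weylPiece n A)
    (fun x hx => (hderiv A x hx).continuousAt.continuousWithinAt) (hinj A) hG
  have hmeas : Measurable fun E => F E * rinv σ v E n ^ 2 :=
    hF.mul ((measurable_rinv measurable_const measurable_id n).pow_const 2)
  have hgI : ∀ A, ∫⁻ t, g A t ≤ 17 * ∫⁻ E in weylPiece σ v n A, F E * rinv σ v E n ^ 2 := by
    intro A
    rw [← lintegral_const_mul _ hmeas]
    exact (lintegral_pushSup_le (measurableSet_weylPiece n A) (hderiv A) (hinj A)).trans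
      (setLIntegral_mono (hmeas.const_mul _) fun E hE => ofReal_deriv_weyl_mul_le hE _)
  have hdisj : Set.PairwiseDisjoint (P : Set (Finset ℝ)) (weylPiece σ v n) := by
    intro A _ B _ hAB
    refine Set.disjoint_left.2 fun E hA hB => hAB ?_
    rw [← hA.1.2, ← hB.1.2]
  have htot : ∫⁻ t in Set.Icc (-1 : ℝ) 1, ∑ A ∈ P, g A t ≤ 17 * I := by
    refine (setLIntegral_le_lintegral _ _).trans ?_
    rw [lintegral_finsetSum _ fun A _ => hg A]
    refine (sum_le_sum fun A _ => hgI A).trans ?_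
    rw [← mul_sum, ← lintegral_biUnion_finset hdisj fun A _ => measurableSet_weylPiece n A]
    gcongr
    rw [hI, window]
    exact lintegral_mono_set (Set.iUnion₂_subset fun A _ E hE => hE.2.1)
  obtain ⟨t, ht, hle⟩ := exists_le_setLAverage (μ := volume) (s := Set.Icc (-1 : ℝ) 1)
    (f := fun t => ∑ A ∈ P, g A t) (by simp) (by simp)
    (Finset.measurable_fun_sum _ fun A _ => hg A).aemeasurable
  refine ⟨t, abs_le.2 ht, fun S hS => ?_⟩
  have hne : ∀ e ∈ S, sol σ v e (n + 1) ≠ 0 := by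
    intro e he h0
    have h1 := (hS e he).2
    have := state_sq_pos (σ := σ) (v := v) (E := e) n
    simp only [state, h0] at this h1
    simp [show sol σ v e n = 0 by linarith] at this
  have hw : ∀ e ∈ S, weyl σ v n e = t := fun e he => by
    have := (hS e he).2
    have h0 := hne e he
    rw [weyl]
    field_simp
    linarith
  set idx : ℝ → Finset ℝ := fun e => (solPoly σ v (n + 1)).roots.toFinset.filter (· < e)
  have hmem : ∀ e ∈ S, e ∈ weylPiece σ v n (idx e) := fun e he =>
    ⟨⟨hne e he, rfl⟩, abs_le.1 (hS e he).1, by rwa [Set.mem_preimage, hw e he]⟩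
  have hidx : Set.InjOn idx S := fun e he e' he' h =>
    hinj (idx e) (hmem e he) (h ▸ hmem e' he') ((hw e he).trans (hw e' he').symm)
  calc ∑ e ∈ S, G e = ∑ e ∈ S, g (idx e) t := sum_congr rfl fun e he => by
        rw [← hw e he, ← pushSup_apply (G := G) (hinj _) (hmem e he)]
    _ = ∑ A ∈ S.image idx, g A t := (sum_image (f := fun A => g A t) hidx).symm
    _ ≤ ∑ A ∈ P, g A t := sum_le_sum_of_subset (image_subset_iff.2 fun e _ =>
        mem_powerset.2 (filter_subset _ _))
    _ ≤ 17 * I := by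
        refine hle.trans (le_trans ?_ htot)
        rw [setLAverage_eq]
        refine ENNReal.div_le_of_le_mul (le_mul_of_one_le_right' ?_)
        rw [Real.volume_Icc]
        norm_num

end Weyl

/-! ### Spectral measures of the half-line operators -/

section SpectralMeasure

variable {σ : ℝ} {v : ℕ → ℝ}

lemma linearMap_eq_of_solPoly {L₁ L₂ : ℝ[X] →ₗ[ℝ] ℝ} {M : ℕ}
    (h : ∀ n ≤ M, L₁ (solPoly σ v (n + 1)) = L₂ (solPoly σ v (n + 1))) {Q : ℝ[X]}
    (hQ : Q.natDegree ≤ M) : L₁ Q = L₂ Q := by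
  induction M generalizing Q with
  | zero =>
    rw [eq_C_of_natDegree_le_zero hQ, ← mul_one (C _), ← smul_eq_C_mul, map_smul, map_smul]
    have := h 0 le_rfl
    simp only [solPoly] at this
    rw [this]
  | succ M ih =>
    set P := solPoly σ v (M + 1 + 1)
    have hR : (Q - Q.coeff (M + 1) • P).natDegree ≤ M := by
      refine natDegree_le_iff_coeff_eq_zero.2 fun N hN => ?_
      have hP : P.coeff (M + 1) = 1 := by
        have := (solPoly_succ_monic (σ := σ) (v := v) (M + 1)).coeff_natDegree
        rwa [natDegree_solPoly_succ] at this
      rcases eq_or_lt_of_le (Nat.succ_le_of_lt hN) with rfl | hlt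
      · simp [hP]
      · have hPd : P.natDegree = M + 1 := natDegree_solPoly_succ _
        rw [coeff_sub, coeff_smul, coeff_eq_zero_of_natDegree_lt (p := P) (by omega),
          coeff_eq_zero_of_natDegree_lt (p := Q) (by omega), smul_zero, sub_zero]
    have h1 := ih (fun n hn => h n (by omega)) hR
    simp only [map_sub, map_smul, h (M + 1) le_rfl, P] at h1
    linarith

/-- `μ` is a probability measure on `[-3, 3]` for which the solutions, as functions of the energy,
are orthonormal. -/
structure IsSpectralMeasure (σ : ℝ) (v : ℕ → ℝ) (μ : Measure ℝ) : Prop where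
  isProbabilityMeasure : IsProbabilityMeasure μ
  ae_mem : ∀ᵐ E ∂μ, E ∈ Set.Icc (-3 : ℝ) 3
  orthonormal : ∀ n k, ∫ E, sol σ v E (n + 1) * sol σ v E (k + 1) ∂μ = if n = k then 1 else 0

lemma integrable_of_continuous {μ : Measure ℝ} [IsFiniteMeasure μ]
    (h : ∀ᵐ E ∂μ, E ∈ Set.Icc (-3 : ℝ) 3) {f : ℝ → ℝ} (hf : Continuous f) : Integrable f μ := by
  rw [← Measure.restrict_eq_self_of_ae_mem h]
  exact hf.continuousOn.integrableOn_compact isCompact_Icc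

lemma continuous_sol_right (n : ℕ) : Continuous fun E => sol σ v E n :=
  (solPoly σ v n).continuous

lemma continuous_frac (m n : ℕ) : Continuous fun E => frac σ v E m n := by
  have h : ∀ n, Continuous fun E => sumSq σ v E n := fun n => by
    unfold sumSq
    exact continuous_finsetSum _ fun i _ => (continuous_sol_right i).pow 2
  exact continuous_const.sub ((h m).div (h n) fun E => (sumSq_pos n).ne')

/-- The spectral measure of a box as a probability measure on the interval `[-3, 3]`. -/
lemma exists_box_measure (hσ : |σ| ≤ 1) (hv : ∀ n, |v n| ≤ 1) (N : ℕ) :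
    ∃ μ : ProbabilityMeasure (Set.Icc (-3 : ℝ) 3), ∀ n ≤ N, ∀ k ≤ N,
      ∫ E : Set.Icc (-3 : ℝ) 3, sol σ v (E : ℝ) (n + 1) * sol σ v (E : ℝ) (k + 1)
          ∂(μ : Measure (Set.Icc (-3 : ℝ) 3)) =
        if n = k then 1 else 0 := by
  obtain ⟨e, -, -, he3, horth⟩ := exists_box_quadrature σ v hσ (fun n _ => hv n) N.succ_pos
  set x : Fin (N + 1) → Set.Icc (-3 : ℝ) 3 := fun i => ⟨e i, abs_le.1 (he3 i)⟩
  set w : Fin (N + 1) → ℝ := fun i => (boxMass σ v (e i) (N + 1))⁻¹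
  have hw : ∀ i, 0 ≤ w i := fun i => (inv_pos.2 (boxMass_pos N.succ_pos)).le
  set μ : Measure (Set.Icc (-3 : ℝ) 3) := ∑ i, ENNReal.ofReal (w i) • Measure.dirac (x i)
  have hsum : ∑ i, w i = 1 := by simpa [w] using horth 0 N.succ_pos 0 N.succ_pos
  have hμ : IsProbabilityMeasure μ := ⟨by
    simp only [μ, Measure.coe_finsetSum, Finset.sum_apply, Measure.smul_apply, measure_univ,
      smul_eq_mul, mul_one]
    rw [← ENNReal.ofReal_sum_of_nonneg fun i _ => hw i, hsum, ENNReal.ofReal_one]⟩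
  refine ⟨⟨μ, hμ⟩, fun n hn k hk => ?_⟩
  rw [← horth n (by omega) k (by omega)]
  change ∫ E, _ ∂μ = _
  rw [integral_finsetSum_measure fun i _ => ?_]
  · refine sum_congr rfl fun i _ => ?_
    rw [integral_smul_measure, integral_dirac, ENNReal.toReal_ofReal (hw i), smul_eq_mul, mul_comm,
      div_eq_mul_inv]
  · exact (integrable_dirac enorm_lt_top).smul_measure ENNReal.ofReal_ne_top

theorem exists_isSpectralMeasure (hσ : |σ| ≤ 1) (hv : ∀ n, |v n| ≤ 1) :
    ∃ μ, IsSpectralMeasure σ v μ := by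
  choose ν hν using exists_box_measure (σ := σ) (v := v) hσ hv
  obtain ⟨μ, -, hμ⟩ := isCompact_univ.ultrafilter_le_nhds
    ((Filter.hyperfilter ℕ).map ν) (by simp)
  have hlim : Filter.Tendsto ν (Filter.hyperfilter ℕ : Filter ℕ) (nhds μ) := hμ
  refine ⟨(μ : Measure (Set.Icc (-3 : ℝ) 3)).map Subtype.val,
    Measure.isProbabilityMeasure_map measurable_subtype_coe.aemeasurable, ?_, fun n k => ?_⟩
  · refine (ae_map_iff measurable_subtype_coe.aemeasurable ?_).2
      (Filter.Eventually.of_forall fun E => E.2)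
    exact measurableSet_Icc
  · have hc' : Continuous fun E => sol σ v E (n + 1) * sol σ v E (k + 1) :=
      (continuous_sol_right _).mul (continuous_sol_right _)
    have hc : Continuous fun E : Set.Icc (-3 : ℝ) 3 =>
        sol σ v (E : ℝ) (n + 1) * sol σ v (E : ℝ) (k + 1) :=
      hc'.comp continuous_subtype_val
    rw [integral_map measurable_subtype_coe.aemeasurable hc'.aestronglyMeasurable]
    have h1 := ProbabilityMeasure.tendsto_iff_forall_integral_tendsto.1 hlim
      (BoundedContinuousFunction.mkOfCompact ⟨_, hc⟩)
    refine tendsto_nhds_unique h1 (tendsto_const_nhds.congr' ?_)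
    have : ∀ᶠ N in (Filter.hyperfilter ℕ : Filter ℕ), max n k ≤ N :=
      Nat.hyperfilter_le_atTop (Filter.eventually_ge_atTop _)
    filter_upwards [this] with N hN
    exact (hν N n (le_of_max_le_left hN) k (le_of_max_le_right hN)).symm

/-- Integration of polynomials against a measure, as a linear functional. -/
def integralPoly {μ : Measure ℝ} (h : ∀ p : ℝ[X], Integrable (fun E => p.eval E) μ) :
    ℝ[X] →ₗ[ℝ] ℝ where
  toFun p := ∫ E, p.eval E ∂μ
  map_add' p q := by simp only [eval_add]; exact integral_add (h p) (h q)
  map_smul' c p := by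
    simp only [eval_smul, smul_eq_mul, RingHom.id_apply]
    exact integral_const_mul c _

/-- A weighted sum of evaluations, as a linear functional on polynomials. -/
def quadrature {ι : Type*} [Fintype ι] (e w : ι → ℝ) : ℝ[X] →ₗ[ℝ] ℝ :=
  ∑ i, w i • leval (e i)

lemma quadrature_apply {ι : Type*} [Fintype ι] (e w : ι → ℝ) (p : ℝ[X]) :
    quadrature e w p = ∑ i, w i * p.eval (e i) := by
  simp [quadrature]

theorem IsSpectralMeasure.lintegral_frac_le {μ : Measure ℝ} (hμ : IsSpectralMeasure σ v μ)
    (hσ : |σ| ≤ 1) (hv : ∀ n, |v n| ≤ 1) {m n k : ℕ} (hmn : m ≤ n) (hnk : n ≤ k)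
    {p : ℝ[X]} {δ : ℝ} (hp : p.natDegree ≤ k)
    (hδ : ∀ E ∈ Set.Icc (-3 : ℝ) 3, |p.eval E - frac σ v E m n| ≤ δ) :
    ∫⁻ E, ENNReal.ofReal (frac σ v E m n) ∂μ ≤
      17 * fracInt σ v m n k + ENNReal.ofReal (2 * δ) := by
  have := hμ.isProbabilityMeasure
  have hint := fun {f : ℝ → ℝ} => integrable_of_continuous (f := f) hμ.ae_mem
  have hδ0 : 0 ≤ δ := (abs_nonneg _).trans (hδ 0 (by norm_num))
  obtain ⟨t, ht, hS⟩ := exists_boundary_value σ v k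
    (F := fun E => ENNReal.ofReal (frac σ v E m n))
    (measurable_frac measurable_const measurable_id m n).ennreal_ofReal
  set v' := Function.update v k t
  have hv' : ∀ i < k, v i = v' i := fun i hi => (Function.update_of_ne hi.ne _ _).symm
  have hpoly : ∀ i ≤ k + 1, solPoly σ v i = solPoly σ v' i := fun i hi =>
    solPoly_congr fun j hj => hv' j (by omega)
  have hsol : ∀ i ≤ k + 1, ∀ E, sol σ v E i = sol σ v' E i := fun i hi E => by
    rw [sol, sol, hpoly i hi]
  have hbox : ∀ E, boxMass σ v E (k + 1) = boxMass σ v' E (k + 1) := fun E =>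
    sum_congr rfl fun j hj => by rw [hsol _ (by simpa using hj)]
  obtain ⟨e, hinj, hroot, he3, horth⟩ := exists_box_quadrature σ v' (N := k + 1) hσ
    (fun n _ => by
      rcases eq_or_ne n k with rfl | h
      · simpa [v'] using ht
      · simpa [v', h] using hv n) k.succ_pos
  set w : Fin (k + 1) → ℝ := fun i => (boxMass σ v (e i) (k + 1))⁻¹ with hwdef
  have hw : ∀ i, 0 ≤ w i := fun i => (inv_pos.2 (boxMass_pos k.succ_pos)).le
  have hsum : ∑ i, w i = 1 := by simpa [w, hbox] using horth 0 k.succ_pos 0 k.succ_pos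
  have hpμ : ∫ E, p.eval E ∂μ = ∑ i, w i * p.eval (e i) := by
    have key := linearMap_eq_of_solPoly (σ := σ) (v := v) (M := k) (Q := p)
      (L₁ := integralPoly fun p => hint p.continuous) (L₂ := quadrature e w) (fun i hi => ?_) hp
    · rwa [quadrature_apply] at key
    · rw [quadrature_apply]
      have h1 := hμ.orthonormal i 0
      have h2 := horth i (by omega) 0 k.succ_pos
      simp only [zero_add, sol_one, mul_one] at h1 h2
      refine h1.trans (h2.symm.trans (sum_congr rfl fun j _ => ?_))
      rw [← hsol _ (by omega), div_eq_inv_mul, ← hbox]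
      rfl
  have hq : ∑ i, w i * frac σ v (e i) m n ≤ (17 * fracInt σ v m n k).toReal ∨
      fracInt σ v m n k = ∞ := by
    by_cases htop : fracInt σ v m n k = ∞
    · exact Or.inr htop
    left
    rw [← ENNReal.ofReal_le_iff_le_toReal (ENNReal.mul_ne_top (by simp) htop),
      ENNReal.ofReal_sum_of_nonneg fun i _ => mul_nonneg (hw i) (frac_nonneg hmn)]
    refine le_trans (le_of_eq ?_) (hS (univ.image e) fun x hx => ?_)
    · rw [sum_image hinj.injOn]
      refine sum_congr rfl fun i _ => ?_
      rw [ENNReal.ofReal_mul (hw i), hwdef, ENNReal.ofReal_inv_of_pos (boxMass_pos k.succ_pos),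
        mul_comm, div_eq_mul_inv]
    · obtain ⟨i, -, rfl⟩ := mem_image.1 hx
      refine ⟨he3 i, ?_⟩
      have := hroot i
      rw [sol_add_two] at this
      rw [hsol _ le_rfl, hsol _ (by omega), ← this]
      simp [v']
  rcases hq with hq | htop
  swap
  · simp [htop]
  by_cases htop : fracInt σ v m n k = ∞
  · simp [htop]
  rw [← ofReal_integral_eq_lintegral_ofReal (hint (continuous_frac m n))
    (Filter.Eventually.of_forall fun E => frac_nonneg hmn)]
  have hle : ∫ E, frac σ v E m n ∂μ ≤ (17 * fracInt σ v m n k).toReal + 2 * δ := by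
    have h1 : ∫ E, frac σ v E m n ∂μ ≤ ∫ E, (p.eval E + δ) ∂μ := by
      refine integral_mono_ae (hint (continuous_frac m n))
        (hint (p.continuous.add continuous_const)) ?_
      filter_upwards [hμ.ae_mem] with E hE
      have := (abs_le.1 (hδ E hE)).1
      linarith
    rw [integral_add (hint p.continuous) (integrable_const _), integral_const, hpμ] at h1
    have h2 : ∑ i, w i * p.eval (e i) ≤ ∑ i, w i * frac σ v (e i) m n + δ := by
      rw [← one_mul δ, ← hsum, sum_mul, ← sum_add_distrib]
      refine sum_le_sum fun i _ => ?_
      rw [← mul_add]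
      refine mul_le_mul_of_nonneg_left ?_ (hw i)
      have := (abs_le.1 (hδ (e i) (abs_le.1 (he3 i)))).2
      linarith
    simp at h1
    linarith
  refine (ENNReal.ofReal_le_ofReal hle).trans ?_
  rw [ENNReal.ofReal_add ENNReal.toReal_nonneg (by positivity), ENNReal.ofReal_toReal
    (ENNReal.mul_ne_top (by simp) htop)]

end SpectralMeasure

/-! ### Pure point spectrum from square-summable solutions -/

section PurePoint

variable {σ : ℝ} {v : ℕ → ℝ} {E : ℝ}

lemma summable_sol_sq {N : ℕ → ℕ} (hmono : Monotone N) (hN : ∀ j, j ≤ N j)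
    (h : Summable fun j => frac σ v E (N j) (N (j + 1))) :
    Summable fun n => sol σ v E (n + 1) ^ 2 := by
  set s : ℕ → ℝ := fun j => sumSq σ v E (N j) with hs
  have hs0 : ∀ j, 0 < s j := fun j => sumSq_pos _
  have hsm : Monotone s := fun i j hij => sumSq_mono (hmono hij)
  obtain ⟨i, hi⟩ := ((tendsto_sum_nat_add fun j => frac σ v E (N j) (N (j + 1))).eventually
    (gt_mem_nhds (show (0 : ℝ) < 1 / 2 by norm_num))).exists
  have hsh : Summable fun k => frac σ v E (N (k + i)) (N (k + i + 1)) :=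
    (summable_nat_add_iff i).2 h
  have hratio : ∀ J,
      1 - ∑ k ∈ range J, frac σ v E (N (k + i)) (N (k + i + 1)) ≤ s i / s (J + i) := by
    intro J
    induction J with
    | zero => simp [(hs0 i).ne']
    | succ J ih =>
      have e1 : s i / s (J + 1 + i) =
          s i / s (J + i) * (1 - frac σ v E (N (J + i)) (N (J + i + 1))) := by
        rw [frac, show J + 1 + i = J + i + 1 by ring]
        have := (hs0 (J + i)).ne'
        have := (hs0 (J + i + 1)).ne'
        simp only [hs] at *
        field_simp
        ring
      have e2 : s i / s (J + i) ≤ 1 := div_le_one_of_le₀ (hsm (by omega)) (hs0 _).le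
      have e3 : 0 ≤ frac σ v E (N (J + i)) (N (J + i + 1)) := frac_nonneg (hmono (by omega))
      rw [sum_range_succ, e1]
      nlinarith
  have hbound : ∀ J, s J ≤ 2 * s i := by
    intro J
    refine (hsm (show J ≤ J + i by omega)).trans ?_
    have h1 : ∑ k ∈ range J, frac σ v E (N (k + i)) (N (k + i + 1)) ≤ 1 / 2 :=
      (hsh.sum_le_tsum _ fun k _ => frac_nonneg (hmono (by omega))).trans hi.le
    have h2 : 1 / 2 ≤ s i / s (J + i) := by linarith [hratio J]
    rw [le_div_iff₀ (hs0 _)] at h2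
    linarith
  refine summable_of_sum_range_le (c := 2 * s i) (fun n => sq_nonneg _) fun n => ?_
  refine le_trans ?_ ((sumSq_mono (hN n)).trans (hbound n))
  rw [sumSq, sum_range_succ', sum_range_succ]
  have := sq_nonneg (sol σ v E (n + 1))
  have := sq_nonneg (sol σ v E 0)
  linarith

lemma ae_summable_sol_sq {μ : Measure ℝ} {N : ℕ → ℕ} (hmono : Monotone N) (hN : ∀ j, j ≤ N j)
    {b : ℕ → ℝ≥0∞} (hb : ∑' j, b j ≠ ∞)
    (h : ∀ j, ∫⁻ E, ENNReal.ofReal (frac σ v E (N j) (N (j + 1))) ∂μ ≤ b j) :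
    ∀ᵐ E ∂μ, Summable fun n => sol σ v E (n + 1) ^ 2 := by
  have hmeas : ∀ j, Measurable fun E => ENNReal.ofReal (frac σ v E (N j) (N (j + 1))) := fun j =>
    (measurable_frac measurable_const measurable_id _ _).ennreal_ofReal
  have hfin : ∫⁻ E, ∑' j, ENNReal.ofReal (frac σ v E (N j) (N (j + 1))) ∂μ ≠ ∞ := by
    rw [lintegral_tsum fun j => (hmeas j).aemeasurable]
    exact ne_top_of_le_ne_top hb (ENNReal.tsum_le_tsum h)
  filter_upwards [ae_lt_top (Measurable.tsum hmeas) hfin] with E hE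
  refine summable_sol_sq hmono hN ?_
  have := ENNReal.summable_toReal hE.ne
  simpa only
    [ENNReal.toReal_ofReal (frac_nonneg (σ := σ) (v := v) (hmono (Nat.le_succ _)))] using this

lemma IsSpectralMeasure.integral_sum_sq {μ : Measure ℝ} (hμ : IsSpectralMeasure σ v μ) (g : ℕ → ℝ)
    (s : Finset ℕ) :
    ∫ E, (∑ n ∈ s, g n * sol σ v E (n + 1)) ^ 2 ∂μ = ∑ n ∈ s, g n ^ 2 := by
  have := hμ.isProbabilityMeasure
  have hint : ∀ n k, Integrable (fun E => g n * g k * (sol σ v E (n + 1) * sol σ v E (k + 1))) μ :=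
    fun n k => integrable_of_continuous hμ.ae_mem
      (continuous_const.mul ((continuous_sol_right _).mul (continuous_sol_right _)))
  have : ∀ E, (∑ n ∈ s, g n * sol σ v E (n + 1)) ^ 2 =
      ∑ n ∈ s, ∑ k ∈ s, g n * g k * (sol σ v E (n + 1) * sol σ v E (k + 1)) := fun E => by
    rw [sq, sum_mul_sum]
    exact sum_congr rfl fun n _ => sum_congr rfl fun k _ => by ring
  simp_rw [this]
  rw [integral_finsetSum _ fun n _ => integrable_finsetSum _ fun k _ => hint n k]
  refine sum_congr rfl fun n hn => ?_
  rw [integral_finsetSum _ fun k _ => hint n k]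
  simp_rw [integral_const_mul, hμ.orthonormal]
  simp [hn, sq]

theorem IsSpectralMeasure.eq_zero_of_hasSum_zero {μ : Measure ℝ} (hμ : IsSpectralMeasure σ v μ)
    {g : ℕ → ℝ} (hg : Summable fun n => g n ^ 2)
    (h : ∀ᵐ E ∂μ, HasSum (fun n => g n * sol σ v E (n + 1)) 0) : g = 0 := by
  have := hμ.isProbabilityMeasure
  set P : Finset ℕ → ℝ → ℝ := fun s E => ∑ n ∈ s, g n * sol σ v E (n + 1) with hP
  have hPc : ∀ s, Continuous fun E => P s E ^ 2 := fun s =>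
    (continuous_finsetSum _ fun n _ => continuous_const.mul (continuous_sol_right _)).pow 2
  have hlint : ∀ s, ∫⁻ E, ENNReal.ofReal (P s E ^ 2) ∂μ = ENNReal.ofReal (∑ n ∈ s, g n ^ 2) := by
    intro s
    rw [← hμ.integral_sum_sq, ofReal_integral_eq_lintegral_ofReal
      (integrable_of_continuous hμ.ae_mem (hPc s))
      (Filter.Eventually.of_forall fun E => sq_nonneg _)]
  set T := ∑' n, g n ^ 2
  have key : ∀ K, ∑ n ∈ range K, g n ^ 2 ≤ T - ∑ n ∈ range K, g n ^ 2 := by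
    intro K
    have hTK : 0 ≤ T - ∑ n ∈ range K, g n ^ 2 :=
      sub_nonneg.2 (hg.sum_le_tsum _ fun n _ => sq_nonneg _)
    rw [← ENNReal.ofReal_le_ofReal_iff hTK, ← hlint]
    have hlim : ∀ᵐ E ∂μ, ENNReal.ofReal (P (range K) E ^ 2) =
        Filter.liminf (fun L => ENNReal.ofReal (P (Ico K L) E ^ 2)) Filter.atTop := by
      filter_upwards [h] with E hE
      refine (Filter.Tendsto.liminf_eq (ENNReal.tendsto_ofReal ?_)).symm
      have h1 := ((hE.tendsto_sum_nat.sub_const (P (range K) E)).pow 2)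
      rw [zero_sub, neg_sq] at h1
      refine h1.congr' ?_
      filter_upwards [Filter.eventually_ge_atTop K] with L hL
      simp only [hP, sum_Ico_eq_sub _ hL]
    rw [lintegral_congr_ae hlim]
    refine (lintegral_liminf_le fun L => (hPc _).measurable.ennreal_ofReal).trans
      (Filter.liminf_le_of_frequently_le' (Filter.Eventually.frequently ?_))
    filter_upwards [Filter.eventually_ge_atTop K] with L hL
    rw [hlint]
    refine ENNReal.ofReal_le_ofReal ?_
    rw [sum_Ico_eq_sub _ hL]
    gcongr
    exact hg.sum_le_tsum _ fun n _ => sq_nonneg _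
  have hT : T ≤ T - T := le_of_tendsto_of_tendsto' hg.hasSum.tendsto_sum_nat
    (hg.hasSum.tendsto_sum_nat.const_sub T) key
  funext n
  have := hg.le_tsum n fun k _ => sq_nonneg _
  have := sq_nonneg (g n)
  exact pow_eq_zero_iff two_ne_zero |>.1 (by linarith)

/-- The even or odd extension of the half-line solution to `ℤ`, according to the sign `σ`. -/
def fullSol (σ : ℝ) (v : ℕ → ℝ) (E : ℝ) : ℤ → ℝ
  | Int.ofNat n => sol σ v E (n + 1)
  | Int.negSucc n => σ * sol σ v E (n + 1)

lemma fullSol_equation {V : ℤ → ℝ} (hσ : σ ^ 2 = 1) (hpos : ∀ n : ℕ, V n = v n)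
    (hneg : ∀ n : ℕ, V (Int.negSucc n) = v n) (n : ℤ) :
    fullSol σ v E (n + 1) + fullSol σ v E (n - 1) + V n * fullSol σ v E n =
      E * fullSol σ v E n := by
  rcases n with (_ | n) | (_ | n)
  · have := hpos 0
    change fullSol σ v E (Int.ofNat 1) + fullSol σ v E (Int.negSucc 0) +
      V ((0 : ℕ) : ℤ) * fullSol σ v E (Int.ofNat 0) = E * fullSol σ v E (Int.ofNat 0)
    simp only [this, fullSol, sol_add_two, zero_add, sol_one, sol_zero]
    ring
  · have := hpos (n + 1)
    rw [show Int.ofNat (n + 1) + 1 = Int.ofNat (n + 2) from rfl,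
      show Int.ofNat (n + 1) - 1 = Int.ofNat n by simp]
    simp only [Int.ofNat_eq_natCast] at this ⊢
    rw [this]
    change sol σ v E (n + 2 + 1) + sol σ v E (n + 1) + v (n + 1) * sol σ v E (n + 1 + 1) =
      E * sol σ v E (n + 1 + 1)
    rw [show n + 2 + 1 = n + 1 + 2 by ring, sol_add_two]
    ring
  · change fullSol σ v E (Int.ofNat 0) + fullSol σ v E (Int.negSucc 1) +
      V (Int.negSucc 0) * fullSol σ v E (Int.negSucc 0) = E * fullSol σ v E (Int.negSucc 0)
    simp only [hneg, fullSol, sol_add_two, zero_add, sol_one, sol_zero]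
    linear_combination -hσ
  · rw [show Int.negSucc (n + 1) + 1 = Int.negSucc n by omega,
      show Int.negSucc (n + 1) - 1 = Int.negSucc (n + 2) by omega, hneg]
    simp only [fullSol]
    rw [show n + 2 + 1 = n + 1 + 2 by ring, sol_add_two]
    ring

lemma exists_isEigenfunction {V : ℤ → ℝ} (hσ : σ ^ 2 = 1) (hpos : ∀ n : ℕ, V n = v n)
    (hneg : ∀ n : ℕ, V (Int.negSucc n) = v n)
    (hsum : Summable fun n => sol σ v E (n + 1) ^ 2) :
    ∃ ψ : lp (fun _ : ℤ => ℝ) 2, IsEigenfunction V E ψ ∧ ∀ n, ψ n = fullSol σ v E n := by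
  have hmem : Memℓp (fullSol σ v E) 2 := by
    refine memℓp_gen ?_
    have h2 : ((2 : ℝ≥0∞).toReal) = (2 : ℕ) := by simp
    simp only [h2, Real.rpow_natCast, Real.norm_eq_abs, sq_abs]
    refine Summable.of_nat_of_neg_add_one hsum ?_
    refine hsum.congr fun n => ?_
    rw [show -((n : ℤ) + 1) = Int.negSucc n by omega]
    simp only [fullSol]
    rw [mul_pow, hσ, one_mul]
  refine ⟨⟨fullSol σ v E, hmem⟩, ⟨fun h0 => ?_, fullSol_equation hσ hpos hneg⟩, fun n => rfl⟩
  have : fullSol σ v E (Int.ofNat 0) = 0 := congrArg (fun ψ : lp (fun _ : ℤ => ℝ) 2 => ψ 0) h0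
  simp [fullSol] at this

theorem hasPurePointSpectrum_of_ae_summable {V : ℤ → ℝ} (hpos : ∀ n : ℕ, V n = v n)
    (hneg : ∀ n : ℕ, V (Int.negSucc n) = v n)
    (h : ∀ σ : ℝ, σ = 1 ∨ σ = -1 → ∃ μ, IsSpectralMeasure σ v μ ∧
      ∀ᵐ E ∂μ, Summable fun n => sol σ v E (n + 1) ^ 2) : HasPurePointSpectrum V := by
  rw [HasPurePointSpectrum, Submodule.topologicalClosure_eq_top_iff, Submodule.eq_bot_iff]
  intro h' hh
  have hsq : Summable fun n : ℤ => h' n ^ 2 := by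
    have h2 : ((2 : ℝ≥0∞).toReal) = (2 : ℕ) := by simp
    simpa only [h2, Real.rpow_natCast, Real.norm_eq_abs, sq_abs] using
      (lp.memℓp h').summable (by simp)
  have hg : ∀ σ : ℝ, σ = 1 ∨ σ = -1 → ∀ n : ℕ, h' (n : ℤ) + σ * h' (Int.negSucc n) = 0 := by
    intro σ hσ
    have hσ2 : σ ^ 2 = 1 := by rcases hσ with rfl | rfl <;> norm_num
    obtain ⟨μ, hμ, hae⟩ := h σ hσ
    refine congrFun (hμ.eq_zero_of_hasSum_zero
      (g := fun n : ℕ => h' (n : ℤ) + σ * h' (Int.negSucc n)) ?_ ?_)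
    · have h1 : Summable fun n : ℕ => h' (n : ℤ) ^ 2 :=
        hsq.comp_injective Nat.cast_injective
      have h2 : Summable fun n : ℕ => h' (Int.negSucc n) ^ 2 :=
        hsq.comp_injective fun _ _ => Int.negSucc.inj
      refine Summable.of_nonneg_of_le (fun n => sq_nonneg _) (fun n => ?_)
        ((h1.add h2).mul_left 2)
      nlinarith [sq_nonneg (h' (n : ℤ) - σ * h' (Int.negSucc n))]
    · filter_upwards [hae] with E hE
      obtain ⟨ψ, hψ, hval⟩ := exists_isEigenfunction hσ2 hpos hneg hE
      have h0 : inner ℝ ψ h' = 0 := hh ψ (Submodule.subset_span ⟨E, hψ⟩)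
      have h1 := lp.hasSum_inner (𝕜 := ℝ) ψ h'
      rw [h0] at h1
      have e : ∀ n : ℕ, inner ℝ (ψ (n : ℤ)) (h' (n : ℤ)) +
          inner ℝ (ψ (-((n : ℤ) + 1))) (h' (-((n : ℤ) + 1))) =
          (h' (n : ℤ) + σ * h' (Int.negSucc n)) * sol σ v E (n + 1) := fun n => by
        have e1 : ψ (n : ℤ) = sol σ v E (n + 1) := hval (Int.ofNat n)
        have e2 : ψ (Int.negSucc n) = σ * sol σ v E (n + 1) := hval (Int.negSucc n)
        rw [show -((n : ℤ) + 1) = Int.negSucc n by omega]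
        simp only [e1, e2, RCLike.inner_apply, conj_trivial]
        ring
      simpa only [e] using h1.nat_add_neg_add_one
  ext n
  have h1 := hg 1 (Or.inl rfl)
  have h2 := hg (-1) (Or.inr rfl)
  rcases n with n | n
  · have := h1 n; have := h2 n
    change h' (n : ℤ) = 0
    linarith
  · have := h1 n; have := h2 n
    change h' (Int.negSucc n) = 0
    linarith

end PurePoint

/-! ### The criterion, and realization of potentials along the orbit -/

section Criterion

variable {σ : ℝ} {v w : ℕ → ℝ}

lemma rinv_congr {E : ℝ} {n : ℕ} (h : ∀ i < n, v i = w i) : rinv σ v E n = rinv σ w E n := by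
  rw [rinv, rinv, state_congr h]

lemma fracInt_congr {m n k : ℕ} (hmn : m ≤ n) (hnk : n ≤ k) (h : ∀ i < k, v i = w i) :
    fracInt σ v m n k = fracInt σ w m n k := by
  refine lintegral_congr fun E => ?_
  rw [rinv_congr h, frac_congr hmn fun i hi => h i (by omega)]

lemma tailInt_congr {n : ℕ} (h : ∀ i < n, v i = w i) : tailInt σ v n = tailInt σ w n := by
  refine lintegral_congr fun E => ?_
  rw [rinv_congr h, tinv_congr h]

theorem hasPurePointSpectrum_of_fracInt_le {V : ℤ → ℝ} (hpos : ∀ n : ℕ, V n = v n)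
    (hneg : ∀ n : ℕ, V (Int.negSucc n) = v n) (hv : ∀ n, |v n| ≤ 1) {N : ℕ → ℕ}
    (hmono : Monotone N) (hN : ∀ j, j ≤ N j)
    (h : ∀ σ : ℝ, σ = 1 ∨ σ = -1 → ∀ j,
      fracInt σ v (N j) (N (j + 1)) (N (j + 2)) ≤ ENNReal.ofReal ((1 / 2) ^ j) ∧
      ∃ p : ℝ[X], p.natDegree ≤ N (j + 2) ∧ ∀ E ∈ Set.Icc (-3 : ℝ) 3,
        |p.eval E - frac σ v E (N j) (N (j + 1))| ≤ (1 / 2) ^ j) :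
    HasPurePointSpectrum V := by
  refine hasPurePointSpectrum_of_ae_summable hpos hneg fun σ hσ => ?_
  have hσ1 : |σ| ≤ 1 := by rcases hσ with rfl | rfl <;> simp
  obtain ⟨μ, hμ⟩ := exists_isSpectralMeasure hσ1 hv
  refine ⟨μ, hμ, ae_summable_sol_sq hmono hN
    (b := fun j => ENNReal.ofReal (19 * (1 / 2) ^ j)) ?_ fun j => ?_⟩
  · exact (summable_geometric_two.mul_left 19).tsum_ofReal_ne_top
  · obtain ⟨h1, p, hp, hδ⟩ := h σ hσ j
    refine (hμ.lintegral_frac_le hσ1 hv (hmono (Nat.le_succ _)) (hmono (Nat.le_succ _)) hp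
      hδ).trans ?_
    rw [show (19 : ℝ) * (1 / 2) ^ j = 17 * (1 / 2) ^ j + 2 * (1 / 2) ^ j by ring,
      ENNReal.ofReal_add (by positivity) (by positivity),
      ENNReal.ofReal_mul (p := 17) (by norm_num)]
    gcongr
    simp

end Criterion

section Realization

variable {α ω : ℝ}

/-- The points of the orbit. -/
def site (α ω : ℝ) (n : ℤ) : AddCircle (1 : ℝ) := ((ω + n * α : ℝ) : AddCircle (1 : ℝ))

lemma site_injective (hα : Irrational α) (ω : ℝ) : Function.Injective (site α ω) := by
  intro m n h
  rw [site, site, ← sub_eq_zero, ← AddCircle.coe_sub, AddCircle.coe_eq_zero_iff] at h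
  obtain ⟨k, hk⟩ := h
  by_contra hmn
  have hmn : ((m - n : ℤ) : ℝ) ≠ 0 := Int.cast_ne_zero.2 (sub_ne_zero.2 hmn)
  refine hα ⟨k / (m - n : ℤ), ?_⟩
  push_cast at hmn ⊢
  rw [div_eq_iff hmn]
  simp only [zsmul_eq_mul, mul_one] at hk
  linarith

/-- The reflection that maps the site `n` to the site `-1 - n`. -/
def reflect (α ω : ℝ) : C(AddCircle (1 : ℝ), AddCircle (1 : ℝ)) :=
  ⟨fun x => ((2 * ω - α : ℝ) : AddCircle (1 : ℝ)) - x, by fun_prop⟩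

lemma reflect_reflect (x : AddCircle (1 : ℝ)) : reflect α ω (reflect α ω x) = x := by
  simp [reflect]

lemma reflect_site (n : ℤ) : reflect α ω (site α ω n) = site α ω (-1 - n) := by
  simp only [reflect, site, ContinuousMap.coe_mk, ← AddCircle.coe_sub]
  congr 1
  push_cast
  ring

/-- Realization of finitely many prescribed values by a small symmetric function. -/
lemma exists_symmetric_function (hα : Irrational α) (ω : ℝ) {N : ℕ} {d : ℕ → ℝ} {δ : ℝ} (hδ : 0 ≤ δ)
    (hd : ∀ n, |d n| ≤ δ) :
    ∃ g : C(AddCircle (1 : ℝ), ℝ), ‖g‖ ≤ δ ∧ (∀ x, g (reflect α ω x) = g x) ∧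
      ∀ n < N, g (site α ω (n : ℕ)) = d n := by
  set idx : ℤ → ℕ := fun n => Int.rec id id n with hidx
  set X := {n : ℤ // n ∈ Ico (-(N : ℤ)) N}
  have he : Topology.IsClosedEmbedding fun k : X => site α ω k :=
    (continuous_of_discreteTopology).isClosedEmbedding
      ((site_injective hα ω).comp Subtype.val_injective)
  obtain ⟨g, hg, hgd⟩ := (⟨fun k : X => d (idx k), continuous_of_discreteTopology⟩ :
    C(X, ℝ)).exists_extension_forall_mem_of_isClosedEmbedding (t := Set.Icc (-δ) δ)
    (fun k => abs_le.1 (hd _)) ⟨0, by simpa⟩ he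
  have hval : ∀ n : ℤ, n ∈ Ico (-(N : ℤ)) N → g (site α ω n) = d (idx n) := fun n hn =>
    congrFun hgd ⟨n, hn⟩
  refine ⟨(1 / 2 : ℝ) • (g + g.comp (reflect α ω)), ?_, fun x => ?_, fun n hn => ?_⟩
  · refine (ContinuousMap.norm_le _ hδ).2 fun x => ?_
    have h1 := hg x
    have h2 := hg (reflect α ω x)
    simp only [ContinuousMap.smul_apply, ContinuousMap.add_apply, ContinuousMap.comp_apply,
      smul_eq_mul, Real.norm_eq_abs, abs_le]
    constructor <;> linarith [h1.1, h1.2, h2.1, h2.2]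
  · simp [reflect_reflect, add_comm]
  · have h1 := hval n (by simp; omega)
    have h2 := hval (Int.negSucc n) (by simp; omega)
    have e : site α ω (-1 - (n : ℤ)) = site α ω (Int.negSucc n) := by congr 1; omega
    simp only [ContinuousMap.smul_apply, ContinuousMap.add_apply, ContinuousMap.comp_apply,
      smul_eq_mul, reflect_site, e, h1, h2]
    change 1 / 2 * (d n + d n) = d n
    ring

end Realization

/-! ### The inductive construction -/

section Construction

variable {α ω : ℝ}

/-- The potential generated by a function on the positive half of the orbit. -/
def sample (α ω : ℝ) (f : C(AddCircle (1 : ℝ), ℝ)) (n : ℕ) : ℝ := f (site α ω n)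

lemma abs_sample_le (f : C(AddCircle (1 : ℝ), ℝ)) (n : ℕ) : |sample α ω f n| ≤ ‖f‖ :=
  f.norm_coe_le_norm _

lemma exists_pos_forall_mul_le {K τ : ℝ≥0∞} (hK : K ≠ ∞) (hτ : τ ≠ 0) :
    ∃ a : ℝ≥0∞, a ≠ 0 ∧ a ≤ 1 ∧ ∀ x ≤ a, 4 * (K * x) ≤ τ := by
  refine ⟨min 1 (τ / (4 * K)), ?_, min_le_left _ _, fun x hx => ?_⟩
  · exact (lt_min one_pos (ENNReal.div_pos hτ (by finiteness))).ne'
  · rw [← mul_assoc]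
    exact (mul_le_mul_right (hx.trans (min_le_right _ _)) _).trans ENNReal.mul_div_le

lemma exists_seq_of_step {X : Type*} {P : ℕ → X → Prop} {R : ℕ → X → X → Prop} (h0 : ∃ x, P 0 x)
    (hs : ∀ j x, P j x → ∃ y, P (j + 1) y ∧ R j x y) :
    ∃ u : ℕ → X, ∀ j, P j (u j) ∧ R j (u j) (u (j + 1)) := by
  obtain ⟨x₀, hx₀⟩ := h0
  choose next hP hR using hs
  let u : ∀ j, {x // P j x} := fun j =>
    Nat.rec ⟨x₀, hx₀⟩ (fun j x => ⟨next j x x.2, hP j x x.2⟩) j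
  exact ⟨fun j => (u j).1, fun j => ⟨(u j).2, hR j (u j).1 (u j).2⟩⟩

/-- Extension of the controlled part of the potential by a small change of the function. -/
theorem exists_function_extension (hα : Irrational α) {η : ℝ} {C₀ : ℝ≥0∞} {β : ℕ → ℝ≥0∞}
    (hη : 0 < η) (hη2 : η ≤ 1 / 2) (hC : C₀ ≠ ∞) (hβ : ∑' l, β l ≠ ∞)
    (hB : ∀ (c : ℕ → ℝ) (E : ℝ), (∀ n, |E - c n| + η ≤ 4) → TransferBounds c E η C₀ β)
    {f : C(AddCircle (1 : ℝ), ℝ)} (hf : ‖f‖ ≤ 1 / 2) (hsymm : ∀ x, f (reflect α ω x) = f x)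
    {m n : ℕ} (hmn : m ≤ n) (S : Finset ℝ) {τ₁ τ₂ τ₃ : ℝ≥0∞}
    (h1 : 4 * (C₀ * ∑ σ ∈ S, fracInt σ (sample α ω f) m n n) ≤ τ₁)
    (h2 : 4 * (C₀ * (∑' l, β l) * ∑ σ ∈ S, tailInt σ (sample α ω f) n) ≤ τ₂)
    (hfin : ∑ σ ∈ S, tailInt σ (sample α ω f) n ≠ ∞)
    (h01 : τ₁ ≠ 0) (h02 : τ₂ ≠ 0) (h03 : τ₃ ≠ 0) (L : ℕ) :
    ∃ (g : C(AddCircle (1 : ℝ), ℝ)) (k : ℕ), n + L ≤ k ∧ ‖g - f‖ ≤ η ∧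
      (∀ x, g (reflect α ω x) = g x) ∧ (∀ i < n, sample α ω g i = sample α ω f i) ∧
      ∑ σ ∈ S, fracInt σ (sample α ω g) m n k ≤ τ₁ ∧
      ∑ σ ∈ S, fracInt σ (sample α ω g) n k k ≤ τ₂ ∧
      ∑ σ ∈ S, tailInt σ (sample α ω g) k ≤ τ₃ := by
  obtain ⟨l, hl, w, hw, hwη, hw1, hw2, hw3⟩ := exists_extension hη hη2 hC hβ hB
    (fun n => (abs_sample_le f n).trans hf) hmn S h1 h2 hfin h01 h02 h03 L
  obtain ⟨g, hg, hgs, hgv⟩ := exists_symmetric_function hα ω (N := n + l)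
    (d := fun i => w i - sample α ω f i) hη.le fun i => by
      by_cases hi : i ∈ Ico n (n + l)
      · exact hwη i hi
      · simp [hw i hi, hη.le]
  have hval : ∀ i < n + l, sample α ω (f + g) i = w i := fun i hi => by
    simp [sample, hgv i hi]
  refine ⟨f + g, n + l, by omega, by simpa using hg, fun x => by simp [hsymm, hgs],
    fun i hi => ?_, ?_, ?_, ?_⟩
  · rw [hval i (by omega), hw i (by simp; omega)]
  · simpa only [fracInt_congr hmn (Nat.le_add_right n l) hval] using hw1
  · simpa only [fracInt_congr (Nat.le_add_right n l) le_rfl hval] using hw2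
  · simpa only [tailInt_congr hval] using hw3

/-- The potential is under control up to `n`; the part beyond `m` is to be absorbed. -/
structure IsStage (α ω δ : ℝ) (a b : ℝ≥0∞) (j : ℕ) (f : C(AddCircle (1 : ℝ), ℝ)) (m n : ℕ) :
    Prop where
  symm : ∀ x, f (reflect α ω x) = f x
  norm_le : ‖f‖ ≤ δ * (1 - (1 / 2) ^ (j + 1))
  le : m ≤ n
  lt : j < n
  fracInt_le : ∑ σ ∈ ({1, -1} : Finset ℝ), fracInt σ (sample α ω f) m n n ≤ a
  tailInt_le : ∑ σ ∈ ({1, -1} : Finset ℝ), tailInt σ (sample α ω f) n ≤ b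

/-- The relation between consecutive stages `(f, m, n)` and `(g, n, k)`. -/
structure IsStep (α ω δ : ℝ) (j : ℕ) (f g : C(AddCircle (1 : ℝ), ℝ)) (m n k : ℕ) : Prop where
  norm_sub_le : ‖g - f‖ ≤ δ * (1 / 2) ^ (j + 2)
  sample_eq : ∀ i < n, sample α ω g i = sample α ω f i
  fracInt_le : ∀ σ : ℝ, σ = 1 ∨ σ = -1 →
    fracInt σ (sample α ω g) m n k ≤ ENNReal.ofReal ((1 / 2) ^ j)
  exists_polynomial : ∀ σ : ℝ, σ = 1 ∨ σ = -1 → ∃ p : ℝ[X], p.natDegree ≤ k ∧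
    ∀ E ∈ Set.Icc (-3 : ℝ) 3, |p.eval E - frac σ (sample α ω f) E m n| ≤ (1 / 2) ^ j

variable {δ : ℝ} {η : ℝ} {C₀ a a' b b' : ℝ≥0∞} {β : ℕ → ℝ≥0∞}

lemma tailInt_zero_ne_top {σ : ℝ} {v : ℕ → ℝ} : tailInt σ v 0 ≠ ∞ := by
  refine ne_top_of_le_ne_top (b := ∫⁻ _, 1 * 1 ∂window) (by simp) (lintegral_mono fun E => ?_)
  have h : ∀ {x : ℝ}, 1 ≤ x → (ENNReal.ofReal (√x))⁻¹ ≤ 1 := fun hx => by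
    rw [ENNReal.inv_le_one, ENNReal.one_le_ofReal]
    exact Real.one_le_sqrt.2 hx
  exact mul_le_mul' (h (one_le_sumSq 0)) (h (by simp [state, sq_nonneg]))

lemma exists_isStage_zero (hα : Irrational α) (ω : ℝ) (hδ : 0 < δ) (hδ2 : δ ≤ 1 / 2)
    (hC : C₀ ≠ ∞) (hβ : ∑' l, β l ≠ ∞)
    (hB : ∀ (c : ℕ → ℝ) (E : ℝ), (∀ n, |E - c n| + δ * (1 / 2) ^ 1 ≤ 4) →
      TransferBounds c E (δ * (1 / 2) ^ 1) C₀ β) (hb : b ≠ 0) :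
    ∃ f m n, IsStage α ω δ a b 0 f m n := by
  obtain ⟨g, k, hk, hg, hgs, -, -, -, hg3⟩ := exists_function_extension (f := 0) (m := 0) (n := 0)
    (α := α) (ω := ω)
    (τ₁ := 1) (τ₂ := ∞) (τ₃ := b) hα (by positivity) (by linarith) hC hβ hB (by simp) (by simp)
    le_rfl {1, -1} (by simp [fracInt, frac_self]) le_top
    (ENNReal.sum_ne_top.2 fun σ _ => tailInt_zero_ne_top) one_ne_zero (by simp) hb 1
  refine ⟨g, k, k, hgs, ?_, le_rfl, by omega, by simp [fracInt, frac_self], hg3⟩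
  rw [sub_zero] at hg
  linarith

lemma IsStage.exists_step (hα : Irrational α) (hδ : 0 < δ) (hδ2 : δ ≤ 1 / 2) {j : ℕ}
    (hC : C₀ ≠ ∞) (hβ : ∑' l, β l ≠ ∞)
    (hB : ∀ (c : ℕ → ℝ) (E : ℝ), (∀ n, |E - c n| + δ * (1 / 2) ^ (j + 2) ≤ 4) →
      TransferBounds c E (δ * (1 / 2) ^ (j + 2)) C₀ β)
    (ha : ∀ x ≤ a, 4 * (C₀ * x) ≤ ENNReal.ofReal ((1 / 2) ^ j)) (hb : b ≠ ∞)
    (hab : ∀ x ≤ b, 4 * (C₀ * (∑' l, β l) * x) ≤ a') (ha' : a' ≠ 0) (hb' : b' ≠ 0)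
    {f : C(AddCircle (1 : ℝ), ℝ)} {m n : ℕ} (h : IsStage α ω δ a b j f m n) :
    ∃ g k, IsStage α ω δ a' b' (j + 1) g n k ∧ IsStep α ω δ j f g m n k := by
  have hj : (0 : ℝ) < (1 / 2) ^ j := by positivity
  have hj1 : (1 / 2 : ℝ) ^ j ≤ 1 := pow_le_one₀ (by norm_num) (by norm_num)
  have hη : δ * (1 / 2) ^ (j + 2) ≤ 1 / 2 := by
    rw [pow_add]
    nlinarith
  have hnorm : ‖f‖ ≤ 1 / 2 := h.norm_le.trans (by rw [pow_succ]; nlinarith)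
  choose p hp using fun σ : ℝ => exists_polynomial_near_of_continuousOn (-3) 3
    (fun E => frac σ (sample α ω f) E m n) (continuous_frac m n).continuousOn _ hj
  obtain ⟨g, k, hk, hg, hgs, hgf, hg1, hg2, hg3⟩ := exists_function_extension (τ₃ := b') hα
    (by positivity) hη hC hβ hB hnorm h.symm h.le {1, -1} (ha _ h.fracInt_le)
    (hab _ h.tailInt_le) (ne_top_of_le_ne_top hb h.tailInt_le) (by simp) ha' hb'
    (1 + (p 1).natDegree + (p (-1)).natDegree)
  have hle : ‖g‖ ≤ ‖f‖ + ‖g - f‖ := norm_le_norm_add_norm_sub' g f |>.trans_eq (by ring)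
  refine ⟨g, k, ⟨hgs, ?_, by omega, by have := h.lt; omega, hg2, hg3⟩, hg, hgf, fun σ hσ => ?_,
    fun σ hσ => ⟨p σ, ?_, fun E hE => (hp σ E hE).le⟩⟩
  · have := h.norm_le
    calc ‖g‖ ≤ δ * (1 - (1 / 2) ^ (j + 1)) + δ * (1 / 2) ^ (j + 2) := by linarith
      _ = _ := by ring
  · exact (single_le_sum (f := fun σ => fracInt σ (sample α ω g) m n k) (fun _ _ => zero_le)
      (by simpa using hσ)).trans hg1
  · rcases hσ with rfl | rfl <;> omega

theorem exists_stages (hα : Irrational α) (ω : ℝ) (hδ : 0 < δ) (hδ2 : δ ≤ 1 / 2) :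
    ∃ (f : ℕ → C(AddCircle (1 : ℝ), ℝ)) (N : ℕ → ℕ) (a b : ℕ → ℝ≥0∞), ∀ j,
      IsStage α ω δ (a j) (b j) j (f j) (N j) (N (j + 1)) ∧
      IsStep α ω δ j (f j) (f (j + 1)) (N j) (N (j + 1)) (N (j + 2)) := by
  choose K β hK hβ hB using fun j : ℕ =>
    exists_transfer_bounds (show 0 < δ * (1 / 2) ^ (j + 1) by positivity)
  choose a ha0 _ ha using fun j : ℕ => exists_pos_forall_mul_le (hK (j + 1))
    (show ENNReal.ofReal ((1 / 2) ^ j) ≠ 0 by simp)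
  choose b hb0 hb1 hb using fun j : ℕ => exists_pos_forall_mul_le
    (ENNReal.mul_ne_top (hK (j + 1)) (hβ (j + 1))) (ha0 (j + 1))
  obtain ⟨u, hu⟩ := exists_seq_of_step
    (P := fun j (x : C(AddCircle (1 : ℝ), ℝ) × ℕ × ℕ) =>
      IsStage α ω δ (a j) (b j) j x.1 x.2.1 x.2.2)
    (R := fun j x y => y.2.1 = x.2.2 ∧ IsStep α ω δ j x.1 y.1 x.2.1 x.2.2 y.2.2)
    (by
      obtain ⟨f, m, n, h⟩ := exists_isStage_zero (a := a 0) hα ω hδ hδ2 (hK 0) (hβ 0) (hB 0) (hb0 0)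
      exact ⟨(f, m, n), h⟩)
    (fun j x hx => by
      obtain ⟨g, k, h, h'⟩ := hx.exists_step hα hδ hδ2 (hK (j + 1)) (hβ (j + 1)) (hB (j + 1)) (ha j)
        (ne_top_of_le_ne_top ENNReal.one_ne_top (hb1 j)) (hb j) (ha0 (j + 1)) (hb0 (j + 1))
      exact ⟨(g, x.2.2, k), h, rfl, h'⟩)
  refine ⟨fun j => (u j).1, fun j => (u j).2.1, a, b, fun j => ?_⟩
  obtain ⟨h1, h2, h3⟩ := hu j
  obtain ⟨-, h4, -⟩ := hu (j + 1)
  simp only [h4, h2]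
  exact ⟨h1, h3⟩

theorem exists_small_purePoint (hα : Irrational α) (ω : ℝ) (hδ : 0 < δ) (hδ2 : δ ≤ 1 / 2) :
    ∃ f : C(AddCircle (1 : ℝ), ℝ), ‖f‖ ≤ δ ∧
      HasPurePointSpectrum (fun n : ℤ => f (site α ω n)) := by
  obtain ⟨F, N, a, b, hF⟩ := exists_stages hα ω hδ hδ2
  have hmono : Monotone N := monotone_nat_of_le_succ fun j => (hF j).1.le
  have hN : ∀ j, j ≤ N j
    | 0 => Nat.zero_le _
    | j + 1 => (hF j).1.lt
  have hcauchy : CauchySeq F := cauchySeq_of_le_geometric (1 / 2) (δ * (1 / 2) ^ 2) (by norm_num)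
    fun j => by
      rw [dist_comm, dist_eq_norm]
      exact (hF j).2.norm_sub_le.trans_eq (by ring)
  obtain ⟨f, hf⟩ := cauchySeq_tendsto_of_complete hcauchy
  have hpt : ∀ x, Filter.Tendsto (fun j => F j x) Filter.atTop (nhds (f x)) := fun x =>
    ((ContinuousEvalConst.continuous_eval_const x).tendsto f).comp hf
  have hsymm : ∀ x, f (reflect α ω x) = f x := fun x =>
    tendsto_nhds_unique (hpt _) ((hpt x).congr fun j => ((hF j).1.symm x).symm)
  have hval : ∀ j, ∀ i < N (j + 1), sample α ω f i = sample α ω (F j) i := fun j i hi => by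
    have : ∀ k ≥ j, sample α ω (F k) i = sample α ω (F j) i := fun k hk => by
      induction k, hk using Nat.le_induction with
      | base => rfl
      | succ k hk ih => rw [(hF k).2.sample_eq i (hi.trans_le (hmono (by omega))), ih]
    refine tendsto_nhds_unique (hpt (site α ω i)) (tendsto_const_nhds.congr' ?_)
    filter_upwards [Filter.eventually_ge_atTop j] with k hk using (this k hk).symm
  have hnorm : ‖f‖ ≤ δ := le_of_tendsto hf.norm (.of_forall fun j => (hF j).1.norm_le.trans (by
    have : (0 : ℝ) < (1 / 2) ^ (j + 1) := by positivity
    nlinarith))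
  refine ⟨f, hnorm, hasPurePointSpectrum_of_fracInt_le (v := sample α ω f) (fun n => rfl)
    (fun n => ?_) (fun n => (abs_sample_le f n).trans (by linarith)) hmono hN
    fun σ hσ j => ⟨?_, ?_⟩⟩
  · rw [show Int.negSucc n = -1 - (n : ℤ) by omega, ← reflect_site, hsymm, sample]
  · rw [fracInt_congr (hmono (Nat.le_succ _)) (hmono (Nat.le_succ _)) (hval (j + 1))]
    exact (hF j).2.fracInt_le σ hσ
  · obtain ⟨p, hp, hpE⟩ := (hF j).2.exists_polynomial σ hσ
    refine ⟨p, hp, fun E hE => ?_⟩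
    rw [frac_congr (hmono (Nat.le_succ _)) (hval j)]
    exact hpE E hE

end Construction

end KunzSouillard

/-- Given an irrational frequency `α`, any phase `ω`, and `ε > 0`, there is a continuous
`f : 𝕋 → ℝ` with `‖f‖_∞ < ε` such that the Schrödinger operator with the quasi-periodic
potential `V(n) = f(ω + nα)` has pure point spectrum. -/
theorem purePoint_quasiperiodic_small (α : ℝ) (hα : Irrational α) (ω : ℝ)
    (ε : ℝ) (hε : 0 < ε) :
    ∃ f : C(AddCircle (1:ℝ), ℝ), ‖f‖ < ε ∧
      HasPurePointSpectrum (fun n : ℤ => f ((ω + n * α : ℝ) : AddCircle (1:ℝ))) := by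
  obtain ⟨f, hf, h⟩ := KunzSouillard.exists_small_purePoint hα ω (δ := min ε 1 / 2) (by positivity)
    (by linarith [min_le_right ε 1])
  exact ⟨f, hf.trans_lt (by linarith [min_le_left ε 1]), h⟩
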